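/- arXiv:2412.15940 — 6 statements merged into one kernel-verified Lean document; each statement's English description precedes it below -/
import Mathlib

section
/- Ex-ante approximation guarantee for the Relaxed Foresight Algorithm (quadratic follower): for every leader decision x ∈ X and every integer follower optimum y at x, the leader's value obtained by the algorithm satisfies h(x*) + d_x(y*) ≤ h(x) + d_x(y) + 2·L₂·ρ. In particular, the algorithm's leader objective exceeds the optimal leader objective of the bilevel program (optimistic or pessimistic) by at most 2·L₂·ρ. -/
open Matrix BigOperators

theorem dist_toLp_eq_sqrt_sum_sq {ι : Type*} [Fintype ι] (a b : ι → ℝ) :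
    dist (WithLp.toLp 2 a) (WithLp.toLp 2 b) = √(∑ i, (a - b) i ^ 2) := by
  simp only [EuclideanSpace.dist_eq, Real.dist_eq, sq_abs, Pi.sub_apply]

/-- Replacing a response `y ∈ R x` by the relaxed response `r x` changes the leader's objective by
at most `K * ρ`; this price is paid once at `x₀` and once at the competitor `x`. -/
theorem relaxed_foresight_ex_ante_guarantee_general {α β : Type*} [PseudoMetricSpace β]
    {X : Set α} {f : α → β → ℝ} {K : NNReal} (hf : ∀ x ∈ X, LipschitzWith K (f x))
    {R : α → Set β} {r : α → β} {ρ : ℝ} (hR : ∀ x ∈ X, R x ⊆ Metric.closedBall (r x) ρ)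
    {x₀ : α} (hx₀ : x₀ ∈ X) (hmin : IsMinOn (fun x ↦ f x (r x)) X x₀)
    {y₀ : β} (hy₀ : y₀ ∈ R x₀) {x : α} (hx : x ∈ X) {y : β} (hy : y ∈ R x) :
    f x₀ y₀ ≤ f x y + 2 * K * ρ := by
  have hgap : ∀ x ∈ X, ∀ y ∈ R x, |f x y - f x (r x)| ≤ K * ρ := fun x hx y hy ↦
    (hf x hx).dist_le_mul_of_le (hR x hx hy)
  calc
    f x₀ y₀ ≤ f x₀ (r x₀) + K * ρ := by linarith [(abs_le.mp (hgap x₀ hx₀ y₀ hy₀)).2]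
    _ ≤ f x (r x) + K * ρ := by gcongr; exact hmin hx
    _ ≤ f x y + 2 * K * ρ := by linarith [(abs_le.mp (hgap x hx y hy)).1]

/-- Ex-ante approximation guarantee for the Relaxed Foresight Algorithm with a
convex quadratic integer follower: the leader's value obtained by the algorithm
exceeds the value of any bilevel-feasible leader–follower pair by at most
`2 * L₂ * ρ`, where `ρ` is an ℓ₂ proximity bound for `Q`. -/
theorem relaxed_foresight_ex_ante_guarantee
    (nx ny : ℕ) (hnx : 0 < nx) (hny : 0 < ny)
    -- leader's feasible set (nonempty)
    (X : Set (Fin nx → ℝ)) (hX : X.Nonempty)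
    -- leader's objective pieces
    (h : (Fin nx → ℝ) → ℝ) (dx : (Fin ny → ℝ) → ℝ)
    -- ℓ₂ norm on the follower's space
    (norm2 : (Fin ny → ℝ) → ℝ)
    (hnorm2 : ∀ v, norm2 v = Real.sqrt (∑ i, (v i) ^ 2))
    -- `dx` is ℓ₂-Lipschitz with constant `L2 ≥ 0`
    (L2 : ℝ) (hL2 : 0 ≤ L2)
    (hLip : ∀ a b : Fin ny → ℝ, |dx a - dx b| ≤ L2 * norm2 (a - b))
    -- follower's data: symmetric positive definite `Q`, matrix `C`, vector `c`
    (Q : Matrix (Fin ny) (Fin ny) ℝ) (hQsymm : Q.IsSymm) (hQpd : Q.PosDef)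
    (C : Matrix (Fin ny) (Fin nx) ℝ) (c : Fin ny → ℝ)
    -- follower's objective
    (F : (Fin nx → ℝ) → (Fin ny → ℝ) → ℝ)
    (hF : ∀ x y, F x y = (1 / 2) * (y ⬝ᵥ Q.mulVec y) + (C.mulVec x + c) ⬝ᵥ y)
    -- continuous minimizer of the follower's problem
    (yhat : (Fin nx → ℝ) → (Fin ny → ℝ))
    (hyhat : ∀ x, yhat x = -(Q⁻¹.mulVec (C.mulVec x + c)))
    -- integer follower optimum predicate
    (IntOpt : (Fin nx → ℝ) → (Fin ny → ℝ) → Prop)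
    (hIntOpt : ∀ x y, IntOpt x y ↔
      ((∀ i, ∃ w : ℤ, y i = (w : ℝ)) ∧
        ∀ z : Fin ny → ℝ, (∀ i, ∃ w : ℤ, z i = (w : ℝ)) → F x y ≤ F x z))
    -- `ρ ≥ 0` is a proximity bound for `Q` in the ℓ₂ norm
    (ρ : ℝ) (hρ : 0 ≤ ρ)
    (hprox : ∀ c' : Fin ny → ℝ, ∀ v : Fin ny → ℝ,
      (∀ i, ∃ w : ℤ, v i = (w : ℝ)) →
      (∀ z : Fin ny → ℝ, (∀ i, ∃ w : ℤ, z i = (w : ℝ)) →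
        (1 / 2) * (v ⬝ᵥ Q.mulVec v) + c' ⬝ᵥ v ≤
          (1 / 2) * (z ⬝ᵥ Q.mulVec z) + c' ⬝ᵥ z) →
      norm2 (v + Q⁻¹.mulVec c') ≤ ρ)
    -- an integer follower optimum exists at every feasible leader decision
    (hexists : ∀ x ∈ X, ∃ y, IntOpt x y)
    -- `x*` is leader-optimal for the follower-relaxed problem
    (xstar : Fin nx → ℝ) (hxstarX : xstar ∈ X)
    (hxstarOpt : ∀ x ∈ X, h xstar + dx (yhat xstar) ≤ h x + dx (yhat x))
    -- `y*` is an integer follower optimum at `x*`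
    (ystar : Fin ny → ℝ) (hystar : IntOpt xstar ystar) :
    ∀ x ∈ X, ∀ y : Fin ny → ℝ, IntOpt x y →
      h xstar + dx ystar ≤ h x + dx y + 2 * L2 * ρ := by
  lift L2 to NNReal using hL2
  have hdist : ∀ a b, norm2 (a - b) = dist (WithLp.toLp 2 a) (WithLp.toLp 2 b) := fun a b ↦
    (hnorm2 _).trans (dist_toLp_eq_sqrt_sum_sq a b).symm
  let f (x : Fin nx → ℝ) (y : EuclideanSpace ℝ (Fin ny)) : ℝ := h x + dx y.ofLp
  have hf : ∀ x ∈ X, LipschitzWith L2 (f x) := fun x _ ↦ .of_dist_le_mul fun a b ↦ by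
    simpa only [f, dist_add_left, Real.dist_eq, hdist] using hLip a.ofLp b.ofLp
  let R (x : Fin nx → ℝ) : Set (EuclideanSpace ℝ (Fin ny)) := {y | IntOpt x y.ofLp}
  have hR : ∀ x ∈ X, R x ⊆ Metric.closedBall (WithLp.toLp 2 (yhat x)) ρ := fun x _ y hy ↦ by
    obtain ⟨hint, hmin⟩ := (hIntOpt x y.ofLp).mp hy
    have hnear : norm2 (y.ofLp + Q⁻¹ *ᵥ (C *ᵥ x + c)) ≤ ρ :=
      hprox _ _ hint (by simpa only [hF] using hmin)
    rwa [← sub_neg_eq_add, ← hyhat, hdist] at hnear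
  intro x hx y hy
  exact relaxed_foresight_ex_ante_guarantee_general (y₀ := WithLp.toLp 2 ystar)
    (y := WithLp.toLp 2 y) hf hR hxstarX hxstarOpt hystar hx hy
end

section
/- Approximation guarantee for the Relaxed Foresight Algorithm with diagonal quadratic term: if Q is a diagonal matrix with positive diagonal entries, then for every leader decision x ∈ X and every integer follower optimum y at x, the leader's value obtained by the algorithm satisfies h(x*) + d_x(y*) ≤ h(x) + d_x(y) + 2·L₂·√(n_y). In particular, the algorithm's leader objective exceeds the optimal leader objective of the bilevel program by at most 2·L₂·√(n_y). -/
/-!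
Moving one coordinate of an integer minimizer `y` by `±1` cannot decrease the follower's quadratic,
which bounds each partial derivative at `y` by half the corresponding diagonal entry of `Q`. For
diagonal `Q` the `i`-th partial derivative is `Q i i * (y i - ŷ i)`, so `y` lies within `1/2` of the
continuous minimizer `ŷ` in the sup norm. Exchanging `y` and `ŷ` both at the relaxed optimum and at
the competing leader decision therefore costs at most the sup-norm Lipschitz constant of the
leader's objective, which is at most `√n` times its `ℓ₂` Lipschitz constant.
-/

open Matrix BigOperators

open scoped NNReal

/-- The follower's quadratic objective `y ↦ ½ yᵀQy + bᵀy`. In the bilevel program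
`b = Cx + c` at the leader's decision `x`. -/
noncomputable def quadraticObjective {ι : Type*} [Fintype ι]
    (Q : Matrix ι ι ℝ) (b y : ι → ℝ) : ℝ :=
  (1 / 2) * (y ⬝ᵥ Q *ᵥ y) + b ⬝ᵥ y

/-- The stationary point `-Q⁻¹b` of `½ yᵀQy + bᵀy`, which is the follower's continuous minimizer
when `Q` is positive definite. Junk value: for singular `Q` this is `0`, since then `Q⁻¹ = 0`. -/
noncomputable def stationaryPoint {ι : Type*} [Fintype ι] [DecidableEq ι]
    (Q : Matrix ι ι ℝ) (b : ι → ℝ) : ι → ℝ :=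
  -(Q⁻¹ *ᵥ b)

/-- `y` is an integer follower optimum for the objective `g`: an integer vector minimizing `g` among
integer vectors. Integer vectors are encoded as real vectors with integer coordinates. -/
def IsIntegerMinimizer {ι : Type*} (g : (ι → ℝ) → ℝ) (y : ι → ℝ) : Prop :=
  (∀ i, ∃ w : ℤ, y i = w) ∧ ∀ z : ι → ℝ, (∀ i, ∃ w : ℤ, z i = w) → g y ≤ g z

section Follower

variable {ι : Type*}

theorem IsIntegerMinimizer.le_add_single [DecidableEq ι] {g : (ι → ℝ) → ℝ} {y : ι → ℝ}
    (hy : IsIntegerMinimizer g y) (i : ι) (t : ℤ) : g y ≤ g (y + Pi.single i (t : ℝ)) := by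
  refine hy.2 _ fun j => ?_
  obtain ⟨w, hw⟩ := hy.1 j
  exact ⟨w + Pi.single (M := fun _ => ℤ) i t j, by
    rcases eq_or_ne j i with rfl | hji <;> simp [*]⟩

variable [Fintype ι] {Q : Matrix ι ι ℝ}

theorem quadraticObjective_add_single [DecidableEq ι] (hQ : Q.IsSymm) (b y : ι → ℝ) (i : ι)
    (t : ℝ) :
    quadraticObjective Q b (y + Pi.single i t) =
      quadraticObjective Q b y + (t * (Q *ᵥ y + b) i + Q i i * t ^ 2 / 2) := by
  have cross : y ⬝ᵥ Q *ᵥ Pi.single i t = t * (Q *ᵥ y) i := by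
    rw [dotProduct_mulVec, ← mulVec_transpose, hQ.eq, dotProduct_single, mul_comm]
  have square : Pi.single i t ⬝ᵥ Q *ᵥ Pi.single i t = Q i i * t ^ 2 := by
    simp only [single_dotProduct, mulVec, dotProduct_single]
    ring
  simp only [quadraticObjective, mulVec_add, dotProduct_add, add_dotProduct, cross, square,
    single_dotProduct, dotProduct_single, Pi.add_apply]
  ring

theorem IsIntegerMinimizer.abs_mulVec_add_le (hQ : Q.IsSymm) {b y : ι → ℝ}
    (hy : IsIntegerMinimizer (quadraticObjective Q b) y) (i : ι) :
    |(Q *ᵥ y + b) i| ≤ Q i i / 2 := by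
  classical
  have increment_nonneg (t : ℤ) : 0 ≤ t * (Q *ᵥ y + b) i + Q i i * (t : ℝ) ^ 2 / 2 := by
    have le_moved := hy.le_add_single i t
    rwa [quadraticObjective_add_single hQ, le_add_iff_nonneg_right] at le_moved
  have up := increment_nonneg 1
  have down := increment_nonneg (-1)
  push_cast at up down
  exact abs_le.2 ⟨by linarith, by linarith⟩

theorem mulVec_sub_stationaryPoint [DecidableEq ι] (hQ : IsUnit Q.det) (b y : ι → ℝ) :
    Q *ᵥ (y - stationaryPoint Q b) = Q *ᵥ y + b := by
  rw [stationaryPoint, sub_neg_eq_add, mulVec_add, mulVec_mulVec, mul_nonsing_inv Q hQ, one_mulVec]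

theorem IsIntegerMinimizer.dist_stationaryPoint_le [DecidableEq ι] (hQ : Q.IsDiag)
    (hQpos : ∀ i, 0 < Q i i) {b y : ι → ℝ} (hy : IsIntegerMinimizer (quadraticObjective Q b) y) :
    dist y (stationaryPoint Q b) ≤ 1 / 2 := by
  have det_unit : IsUnit Q.det := by
    rw [← hQ.diagonal_diag, det_diagonal]
    exact (Finset.prod_pos fun i _ => hQpos i).ne'.isUnit
  refine (dist_pi_le_iff (by norm_num)).2 fun i => ?_
  have residual : (Q *ᵥ y + b) i = Q i i * (y i - stationaryPoint Q b i) := by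
    rw [← mulVec_sub_stationaryPoint det_unit]
    nth_rw 1 [← hQ.diagonal_diag]
    rw [mulVec_diagonal, diag_apply, Pi.sub_apply]
  have bound := hy.abs_mulVec_add_le hQ.isSymm i
  rw [residual, abs_mul, abs_of_pos (hQpos i), ← Real.dist_eq] at bound
  exact le_of_mul_le_mul_left (by linarith) (hQpos i)

end Follower

theorem le_add_of_isMinOn_of_dist_le {α Y : Type*} [PseudoMetricSpace Y] {X : Set α}
    {f : α → Y → ℝ} {K : ℝ≥0} (hf : ∀ x ∈ X, LipschitzWith K (f x)) {yhat : α → Y} {xstar : α}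
    (hxstar : xstar ∈ X) (hmin : IsMinOn (fun x => f x (yhat x)) X xstar) {r : ℝ} {ystar : Y}
    (hystar : dist ystar (yhat xstar) ≤ r) {x : α} (hx : x ∈ X) {y : Y}
    (hy : dist y (yhat x) ≤ r) :
    f xstar ystar ≤ f x y + 2 * (K * r) := by
  calc
    f xstar ystar ≤ f xstar (yhat xstar) + K * r := by
      grw [(hf xstar hxstar).le_add_mul ystar (yhat xstar), hystar]
    _ ≤ f x (yhat x) + K * r := by grw [isMinOn_iff.1 hmin x hx]
    _ ≤ f x y + K * r + K * r := by
      grw [(hf x hx).le_add_mul (yhat x) y, dist_comm (yhat x) y, hy]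
    _ = f x y + 2 * (K * r) := by ring

theorem lipschitzWith_of_abs_sub_le_mul_sqrt_sum {ι : Type*} [Fintype ι] {d : (ι → ℝ) → ℝ}
    {L : ℝ≥0} (hd : ∀ a b, |d a - d b| ≤ L * √(∑ i, (a i - b i) ^ 2)) :
    LipschitzWith (L * NNReal.sqrt (Fintype.card ι)) d := by
  refine LipschitzWith.of_dist_le_mul fun a b => ?_
  have sqrt_sum_le : √(∑ i, (a i - b i) ^ 2) ≤ √(Fintype.card ι) * dist a b := by
    simpa [EuclideanSpace.dist_eq, Real.dist_eq, Real.sqrt_eq_rpow] using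
      (PiLp.lipschitzWith_toLp 2 fun _ : ι => ℝ).dist_le_mul a b
  calc
    dist (d a) (d b) ≤ L * √(∑ i, (a i - b i) ^ 2) := hd a b
    _ ≤ L * (√(Fintype.card ι) * dist a b) := by gcongr
    _ = (L * NNReal.sqrt (Fintype.card ι) : ℝ≥0) * dist a b := by
      push_cast
      ring

theorem relaxed_foresight_diagonal_guarantee_general {α ι : Type*} [Fintype ι] [DecidableEq ι]
    {X : Set α} {f : α → (ι → ℝ) → ℝ} {K : ℝ≥0} (hf : ∀ x ∈ X, LipschitzWith K (f x))
    {Q : α → Matrix ι ι ℝ} (hQ : ∀ x ∈ X, (Q x).IsDiag) (hQpos : ∀ x ∈ X, ∀ i, 0 < Q x i i)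
    {b : α → ι → ℝ} {xstar : α} (hxstar : xstar ∈ X)
    (hmin : IsMinOn (fun x => f x (stationaryPoint (Q x) (b x))) X xstar) {ystar : ι → ℝ}
    (hystar : IsIntegerMinimizer (quadraticObjective (Q xstar) (b xstar)) ystar)
    {x : α} (hx : x ∈ X) {y : ι → ℝ}
    (hy : IsIntegerMinimizer (quadraticObjective (Q x) (b x)) y) :
    f xstar ystar ≤ f x y + K := by
  have close {x : α} (hx : x ∈ X) {y : ι → ℝ}
      (hy : IsIntegerMinimizer (quadraticObjective (Q x) (b x)) y) :
      dist y (stationaryPoint (Q x) (b x)) ≤ 1 / 2 :=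
    hy.dist_stationaryPoint_le (hQ x hx) (hQpos x hx)
  calc
    f xstar ystar ≤ f x y + 2 * (K * (1 / 2)) :=
      le_add_of_isMinOn_of_dist_le hf hxstar hmin (close hxstar hystar) hx (close hx hy)
    _ = f x y + K := by ring

/-- Approximation guarantee for the Relaxed Foresight Algorithm when the
follower's quadratic term `Q` is a diagonal matrix with strictly positive
diagonal entries: the leader's value obtained by the algorithm exceeds the
value of any bilevel-feasible leader–follower pair by at most
`2 * L₂ * √(n_y)`. -/
theorem relaxed_foresight_diagonal_guarantee
    (nx ny : ℕ) (hnx : 0 < nx) (hny : 0 < ny)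
    -- leader's feasible set (nonempty)
    (X : Set (Fin nx → ℝ)) (hX : X.Nonempty)
    -- leader's objective pieces
    (h : (Fin nx → ℝ) → ℝ) (dx : (Fin ny → ℝ) → ℝ)
    -- ℓ₂ norm on the follower's space
    (norm2 : (Fin ny → ℝ) → ℝ)
    (hnorm2 : ∀ v, norm2 v = Real.sqrt (∑ i, (v i) ^ 2))
    -- `dx` is ℓ₂-Lipschitz with constant `L2 ≥ 0`
    (L2 : ℝ) (hL2 : 0 ≤ L2)
    (hLip : ∀ a b : Fin ny → ℝ, |dx a - dx b| ≤ L2 * norm2 (a - b))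
    -- follower's data: diagonal `Q` with strictly positive diagonal entries
    (Q : Matrix (Fin ny) (Fin ny) ℝ)
    (hQdiag : ∀ i j, i ≠ j → Q i j = 0)
    (hQpos : ∀ i, 0 < Q i i)
    (C : Matrix (Fin ny) (Fin nx) ℝ) (c : Fin ny → ℝ)
    -- follower's objective
    (F : (Fin nx → ℝ) → (Fin ny → ℝ) → ℝ)
    (hF : ∀ x y, F x y = (1 / 2) * (y ⬝ᵥ Q.mulVec y) + (C.mulVec x + c) ⬝ᵥ y)
    -- continuous minimizer of the follower's problem
    (yhat : (Fin nx → ℝ) → (Fin ny → ℝ))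
    (hyhat : ∀ x, yhat x = -(Q⁻¹.mulVec (C.mulVec x + c)))
    -- integer follower optimum predicate
    (IntOpt : (Fin nx → ℝ) → (Fin ny → ℝ) → Prop)
    (hIntOpt : ∀ x y, IntOpt x y ↔
      ((∀ i, ∃ w : ℤ, y i = (w : ℝ)) ∧
        ∀ z : Fin ny → ℝ, (∀ i, ∃ w : ℤ, z i = (w : ℝ)) → F x y ≤ F x z))
    -- an integer follower optimum exists at every feasible leader decision
    (hexists : ∀ x ∈ X, ∃ y, IntOpt x y)
    -- `x*` is leader-optimal for the follower-relaxed problem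
    (xstar : Fin nx → ℝ) (hxstarX : xstar ∈ X)
    (hxstarOpt : ∀ x ∈ X, h xstar + dx (yhat xstar) ≤ h x + dx (yhat x))
    -- `y*` is an integer follower optimum at `x*`
    (ystar : Fin ny → ℝ) (hystar : IntOpt xstar ystar) :
    ∀ x ∈ X, ∀ y : Fin ny → ℝ, IntOpt x y →
      h xstar + dx ystar ≤ h x + dx y + 2 * L2 * Real.sqrt ny := by
  lift L2 to ℝ≥0 using hL2
  obtain rfl : F = fun x => quadraticObjective Q (C *ᵥ x + c) := funext₂ hF
  obtain rfl : yhat = fun x => stationaryPoint Q (C *ᵥ x + c) := funext hyhat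
  have dx_lipschitz : LipschitzWith (L2 * NNReal.sqrt ny) dx := by
    have abs_sub_le (a b : Fin ny → ℝ) : |dx a - dx b| ≤ L2 * √(∑ i, (a i - b i) ^ 2) := by
      simpa only [hnorm2, Pi.sub_apply] using hLip a b
    simpa only [Fintype.card_fin] using lipschitzWith_of_abs_sub_le_mul_sqrt_sum abs_sub_le
  have leader_lipschitz (x : Fin nx → ℝ) :
      LipschitzWith (L2 * NNReal.sqrt ny) fun y => h x + dx y := by
    simpa using (LipschitzWith.const (h x)).add dx_lipschitz
  intro x hx y hy
  calc
    h xstar + dx ystar ≤ h x + dx y + (L2 * NNReal.sqrt ny : ℝ≥0) :=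
      relaxed_foresight_diagonal_guarantee_general (fun x _ => leader_lipschitz x)
        (Q := fun _ => Q) (b := fun x => C *ᵥ x + c) (fun _ _ i j => hQdiag i j)
        (fun _ _ => hQpos) hxstarX hxstarOpt ((hIntOpt xstar ystar).1 hystar) hx
        ((hIntOpt x y).1 hy)
    _ ≤ h x + dx y + 2 * L2 * √ny := by
      push_cast
      linarith [mul_nonneg L2.coe_nonneg (Real.sqrt_nonneg ny)]
end

section
/- Guarantee under approximate solution of the follower-relaxed problem: suppose instead of solving the relaxed problem exactly, the leader's decision x* ∈ X satisfies the (α,β)-approximation property h(x*) + d_x(ŷ(x*)) ≤ α·(h(x) + d_x(ŷ(x))) + β for every x ∈ X, where α ≥ 1 and β ≥ 0. Then for every x ∈ X and every integer follower optimum y at x, h(x*) + d_x(y*) ≤ α·(h(x) + d_x(y)) + β + (α + 1)·L₂·ρ, where y* is any integer follower optimum at x*. In particular, playing x* against an optimally responding follower gives the leader an objective of at most α·f° + β + (α+1)·L₂·ρ, where f° is the optimal leader objective of the bilevel program. -/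
open Matrix BigOperators

/-!
The relaxed response to a decision misses every actual response by at most `ρ`, so replacing one
by the other changes a `K`-Lipschitz objective by at most `K * ρ`. The approximation inequality pays
this error once at the leader's chosen decision, and once more, scaled by `α`, at the decision it
is compared with.
-/

theorem le_mul_add_of_abs_sub_le {R : Type*} [CommRing R] [LinearOrder R] [IsStrictOrderedRing R]
    {a a' b b' α β ε : R} (hα : 0 ≤ α) (ha : |a - a'| ≤ ε) (hb : |b - b'| ≤ ε)
    (h : a' ≤ α * b' + β) : a ≤ α * b + β + (α + 1) * ε := by
  have ha' : a ≤ a' + ε := by linarith [le_of_abs_le ha]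
  have hb' : b' ≤ b + ε := by linarith [neg_le_of_abs_le hb]
  calc
    a ≤ a' + ε := ha'
    _ ≤ α * b' + β + ε := by gcongr
    _ ≤ α * (b + ε) + β + ε := by gcongr
    _ = α * b + β + (α + 1) * ε := by ring

section EuclideanSpace

variable {ι : Type*} [Fintype ι]

theorem sqrt_sum_sq_sub_eq_dist_toLp (a b : ι → ℝ) :
    √(∑ i, (a - b) i ^ 2) = dist (WithLp.toLp 2 a) (WithLp.toLp 2 b) := by
  simp only [EuclideanSpace.dist_eq, Real.dist_eq, sq_abs, Pi.sub_apply]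

theorem lipschitzWith_comp_ofLp_of_abs_sub_le {d : (ι → ℝ) → ℝ} {K : NNReal}
    (hd : ∀ a b, |d a - d b| ≤ K * √(∑ i, (a - b) i ^ 2)) :
    LipschitzWith K fun y : EuclideanSpace ℝ ι => d y.ofLp :=
  LipschitzWith.of_dist_le_mul fun y z =>
    (hd y.ofLp z.ofLp).trans_eq (by rw [sqrt_sum_sq_sub_eq_dist_toLp])

end EuclideanSpace

theorem relaxed_foresight_approx_FRV_guarantee_general {A Y : Type*} [PseudoMetricSpace Y]
    {X : Set A} {f : A → Y → ℝ} {K : NNReal} (hf : ∀ x ∈ X, LipschitzWith K (f x))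
    {relaxed : A → Y} {Response : A → Y → Prop} {ρ : ℝ}
    (hproximity : ∀ x ∈ X, ∀ y, Response x y → dist y (relaxed x) ≤ ρ)
    {α β : ℝ} (hα : 0 ≤ α) {xstar : A} (hxstar : xstar ∈ X)
    (happrox : ∀ x ∈ X, f xstar (relaxed xstar) ≤ α * f x (relaxed x) + β)
    {ystar : Y} (hystar : Response xstar ystar)
    {x : A} (hx : x ∈ X) {y : Y} (hy : Response x y) :
    f xstar ystar ≤ α * f x y + β + (α + 1) * K * ρ := by
  have herror : ∀ x ∈ X, ∀ y, Response x y → |f x y - f x (relaxed x)| ≤ K * ρ :=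
    fun x hx y hy => (hf x hx).dist_le_mul_of_le (hproximity x hx y hy)
  rw [mul_assoc]
  exact le_mul_add_of_abs_sub_le hα (herror xstar hxstar ystar hystar) (herror x hx y hy)
    (happrox x hx)

/-- Guarantee under approximate solution of the follower-relaxed problem:
if the leader's decision `x*` solves the follower-relaxed problem within an
`(α, β)`-approximation factor (with `α ≥ 1`, `β ≥ 0`), then playing `x*`
against an optimally responding integer follower gives the leader an
objective of at most `α·(h x + dx y) + β + (α + 1)·L₂·ρ` for every
bilevel-feasible pair `(x, y)`; in particular at most
`α·f° + β + (α + 1)·L₂·ρ` where `f°` is the bilevel optimum. -/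
theorem relaxed_foresight_approx_FRV_guarantee
    (nx ny : ℕ) (hnx : 0 < nx) (hny : 0 < ny)
    -- leader's feasible set (nonempty)
    (X : Set (Fin nx → ℝ)) (hX : X.Nonempty)
    -- leader's objective pieces
    (h : (Fin nx → ℝ) → ℝ) (dx : (Fin ny → ℝ) → ℝ)
    -- ℓ₂ norm on the follower's space
    (norm2 : (Fin ny → ℝ) → ℝ)
    (hnorm2 : ∀ v, norm2 v = Real.sqrt (∑ i, (v i) ^ 2))
    -- `dx` is ℓ₂-Lipschitz with constant `L2 ≥ 0`
    (L2 : ℝ) (hL2 : 0 ≤ L2)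
    (hLip : ∀ a b : Fin ny → ℝ, |dx a - dx b| ≤ L2 * norm2 (a - b))
    -- follower's data: symmetric positive definite `Q`, matrix `C`, vector `c`
    (Q : Matrix (Fin ny) (Fin ny) ℝ) (hQsymm : Q.IsSymm) (hQpd : Q.PosDef)
    (C : Matrix (Fin ny) (Fin nx) ℝ) (c : Fin ny → ℝ)
    -- follower's objective
    (F : (Fin nx → ℝ) → (Fin ny → ℝ) → ℝ)
    (hF : ∀ x y, F x y = (1 / 2) * (y ⬝ᵥ Q.mulVec y) + (C.mulVec x + c) ⬝ᵥ y)
    -- continuous minimizer of the follower's problem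
    (yhat : (Fin nx → ℝ) → (Fin ny → ℝ))
    (hyhat : ∀ x, yhat x = -(Q⁻¹.mulVec (C.mulVec x + c)))
    -- integer follower optimum predicate
    (IntOpt : (Fin nx → ℝ) → (Fin ny → ℝ) → Prop)
    (hIntOpt : ∀ x y, IntOpt x y ↔
      ((∀ i, ∃ w : ℤ, y i = (w : ℝ)) ∧
        ∀ z : Fin ny → ℝ, (∀ i, ∃ w : ℤ, z i = (w : ℝ)) → F x y ≤ F x z))
    -- an integer follower optimum exists at every feasible leader decision
    (hexists : ∀ x ∈ X, ∃ y, IntOpt x y)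
    -- `ρ ≥ 0` is a proximity bound for `Q` in the ℓ₂ norm
    (ρ : ℝ) (hρ : 0 ≤ ρ)
    (hprox : ∀ c' : Fin ny → ℝ, ∀ v : Fin ny → ℝ,
      (∀ i, ∃ w : ℤ, v i = (w : ℝ)) →
      (∀ z : Fin ny → ℝ, (∀ i, ∃ w : ℤ, z i = (w : ℝ)) →
        (1 / 2) * (v ⬝ᵥ Q.mulVec v) + c' ⬝ᵥ v ≤
          (1 / 2) * (z ⬝ᵥ Q.mulVec z) + c' ⬝ᵥ z) →
      norm2 (v + Q⁻¹.mulVec c') ≤ ρ)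
    -- `x*` solves the follower-relaxed problem `(α, β)`-approximately
    (α β : ℝ) (hα : 1 ≤ α) (hβ : 0 ≤ β)
    (xstar : Fin nx → ℝ) (hxstarX : xstar ∈ X)
    (hxstarApx : ∀ x ∈ X,
      h xstar + dx (yhat xstar) ≤ α * (h x + dx (yhat x)) + β) :
    ∀ ystar : Fin ny → ℝ, IntOpt xstar ystar →
      ∀ x ∈ X, ∀ y : Fin ny → ℝ, IntOpt x y →
        h xstar + dx ystar ≤ α * (h x + dx y) + β + (α + 1) * L2 * ρ := by
  obtain rfl : norm2 = fun v => √(∑ i, v i ^ 2) := funext hnorm2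
  lift L2 to NNReal using hL2
  have hobjective (x) : LipschitzWith L2 fun y : EuclideanSpace ℝ (Fin ny) => h x + dx y.ofLp :=
    lipschitzWith_comp_ofLp_of_abs_sub_le (d := fun y => h x + dx y) fun a b => by
      simpa only [add_sub_add_left_eq_sub] using hLip a b
  have hproximity (x y) (hy : IntOpt x y) :
      dist (WithLp.toLp 2 y) (WithLp.toLp 2 (yhat x)) ≤ ρ := by
    obtain ⟨hinteger, hminimal⟩ := (hIntOpt x y).1 hy
    simp only [hF] at hminimal
    rw [← sqrt_sum_sq_sub_eq_dist_toLp, hyhat, sub_neg_eq_add]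
    exact hprox (C *ᵥ x + c) y hinteger hminimal
  intro ystar hystar x hx y hy
  exact relaxed_foresight_approx_FRV_guarantee_general
    (Response := fun x y => IntOpt x y.ofLp) (ystar := WithLp.toLp 2 ystar) (y := WithLp.toLp 2 y)
    (fun x _ => hobjective x) (fun x _ y => hproximity x y.ofLp) (zero_le_one.trans hα)
    hxstarX hxstarApx hystar hx hy
end

section
/- Approximation guarantee for the Relaxed Foresight Algorithm with an integer-linear follower (few variables, many constraints): for every leader decision x ∈ X and every maximizer y of dᵀy over P(x) ∩ ℤ^{n_y}, the leader's value obtained by the algorithm satisfies h(x*) + dᵀy* ≤ h(x) + dᵀy + 2·‖d‖₁·n_y·Δ(D). In particular, the algorithm's leader objective exceeds the optimal leader objective of the bilevel program by at most 2·‖d‖₁·n_y·Δ(D). -/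
open Matrix BigOperators

/-!
The leader's value at `(x*, y*)` is at most the value of the relaxed problem, which is at most
`h x + d ⬝ᵥ ŷ` for a relaxed optimum `ŷ` of the follower at `x`. So everything reduces to the
integrality gap `d ⬝ᵥ (ŷ - y)` of one linear program with an integer optimum `y`, which is bounded
by the proximity argument of Cook, Gerards, Schrijver and Tardos.

Append an identity block to `D`, so that the resulting matrix `B` is injective; this does not
increase its subdeterminants. Then `ŷ - y` is a nonnegative combination `∑ tᵢ cᵢ` of at most `n`
integer vectors with entries at most `Δ`, where no row of `B` takes opposite signs on `cᵢ` and
`ŷ - y`. The `cᵢ` have minimal support and are therefore given by Cramer's rule. Put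
`p = ∑ ⌊tᵢ⌋ cᵢ`. Every row of `D (y + p)` lies between the corresponding rows of `D y` and `D ŷ`, so
`y + p` is feasible and `d ⬝ᵥ p ≤ 0`, while `ŷ - y - p = ∑ fract(tᵢ) cᵢ` has entries at most `n Δ`.
-/

namespace RelaxedForesight

section ConformalDecomposition

variable {K V ι : Type*} [Field K] [AddCommGroup V] [Module K V]

/-- The subspace of vectors `z` such that the support of `A z` is contained in that of `A v`. -/
def supportSpace (A : V →ₗ[K] ι → K) (v : V) : Submodule K V :=
  (Submodule.pi {i | A v i = 0} fun _ ↦ ⊥).comap A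

variable {A : V →ₗ[K] ι → K} {u v w : V}

theorem mem_supportSpace : w ∈ supportSpace A v ↔ ∀ i, A v i = 0 → A w i = 0 := by
  simp [supportSpace, Submodule.mem_pi]

theorem mem_supportSpace_self : v ∈ supportSpace A v := mem_supportSpace.2 fun _ ↦ id

theorem supportSpace_le_of_mem (hw : w ∈ supportSpace A v) :
    supportSpace A w ≤ supportSpace A v :=
  fun _ hz ↦ mem_supportSpace.2 fun i hi ↦
    mem_supportSpace.1 hz i (mem_supportSpace.1 hw i hi)

theorem finrank_supportSpace_lt [FiniteDimensional K V] (hw : w ∈ supportSpace A v) {i : ι}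
    (hwi : A w i = 0) (hvi : A v i ≠ 0) :
    Module.finrank K (supportSpace A w) < Module.finrank K (supportSpace A v) := by
  refine Submodule.finrank_lt_finrank_of_lt (lt_of_le_not_ge (supportSpace_le_of_mem hw) ?_)
  exact fun hle ↦ hvi (mem_supportSpace.1 (hle mem_supportSpace_self) i hwi)

variable [LinearOrder K] [IsStrictOrderedRing K]

/-- The vectors conformal to `v` with respect to `A`: those whose image under `A` lies in every
closed orthant containing `A v`. -/
def conformalCone (A : V →ₗ[K] ι → K) (v : V) : PointedCone K V where
  carrier := {z | ∀ i, (0 ≤ A v i → 0 ≤ A z i) ∧ (A v i ≤ 0 → A z i ≤ 0)}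
  zero_mem' i := by simp
  add_mem' hy hz i := by
    simp only [map_add, Pi.add_apply]
    exact ⟨fun h ↦ add_nonneg ((hy i).1 h) ((hz i).1 h),
      fun h ↦ add_nonpos ((hy i).2 h) ((hz i).2 h)⟩
  smul_mem' r z hz i := by
    rw [← Nonneg.coe_smul, map_smul, Pi.smul_apply, smul_eq_mul]
    exact ⟨fun h ↦ mul_nonneg r.2 ((hz i).1 h),
      fun h ↦ mul_nonpos_of_nonneg_of_nonpos r.2 ((hz i).2 h)⟩

theorem mem_conformalCone_self : v ∈ conformalCone A v := fun _ ↦ ⟨id, id⟩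

theorem conformalCone_le_of_mem (hv : v ∈ conformalCone A w) :
    conformalCone A v ≤ conformalCone A w :=
  fun _ hu i ↦ ⟨fun h ↦ (hu i).1 ((hv i).1 h), fun h ↦ (hu i).2 ((hv i).2 h)⟩

theorem mem_supportSpace_of_mem_conformalCone (hw : w ∈ conformalCone A v) :
    w ∈ supportSpace A v :=
  mem_supportSpace.2 fun i hi ↦ le_antisymm ((hw i).2 hi.le) ((hw i).1 hi.ge)

-- When `v` moves along `± w`, a coordinate minimising `|A v i / A w i|` is the first to vanish.
theorem exists_sub_smul_mem_conformalCone [Finite ι] (hw : A w ≠ 0) :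
    ∃ i, A w i ≠ 0 ∧ v - (A v i / A w i) • w ∈ conformalCone A v := by
  obtain ⟨i, hi, hmin⟩ := Set.exists_min_image {i | A w i ≠ 0} (fun i ↦ |A v i| / |A w i|)
    (Set.toFinite _) (Function.ne_iff.1 hw)
  refine ⟨i, hi, fun k ↦ ?_⟩
  have hstep : |A v i / A w i * A w k| ≤ |A v k| := by
    by_cases hk : A w k = 0
    · simp [hk]
    · rw [abs_mul, abs_div]
      exact (le_div_iff₀ (abs_pos.2 hk)).1 (hmin k hk)
  simp only [map_sub, map_smul, Pi.sub_apply, Pi.smul_apply, smul_eq_mul]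
  constructor <;> intro hk
  · rw [abs_of_nonneg hk] at hstep
    linarith [(abs_le.1 hstep).2]
  · rw [abs_of_nonpos hk] at hstep
    linarith [(abs_le.1 hstep).1]

theorem exists_sub_smul_finrank_lt [Finite ι] (hA : Function.Injective A) (hw : w ≠ 0)
    (hwv : w ∈ supportSpace A v) :
    ∃ t : K, v - t • w ∈ conformalCone A v ∧
      Module.finrank K (supportSpace A (v - t • w)) < Module.finrank K (supportSpace A v) ∧
      (w ∈ conformalCone A v → 0 ≤ t) := by
  have : FiniteDimensional K V := Module.Finite.of_injective A hA
  obtain ⟨i, hwi, hstep⟩ :=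
    exists_sub_smul_mem_conformalCone (v := v) ((map_ne_zero_iff A hA).2 hw)
  have hvi : A v i ≠ 0 := mt (mem_supportSpace.1 hwv i) hwi
  refine ⟨A v i / A w i, hstep, ?_, fun hconf ↦ ?_⟩
  · exact finrank_supportSpace_lt (mem_supportSpace_of_mem_conformalCone hstep)
      (by simp [hwi]) hvi
  · rcases le_total 0 (A v i) with h | h
    · exact div_nonneg h ((hconf i).1 h)
    · exact div_nonneg_of_nonpos h ((hconf i).2 h)

theorem exists_conformal_minimal_support [Finite ι] (hA : Function.Injective A) (hv : v ≠ 0) :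
    ∃ u ≠ 0, u ∈ conformalCone A v ∧ supportSpace A u ≤ Submodule.span K {u} := by
  obtain ⟨u, ⟨hu, huv⟩, hmin⟩ := exists_minimalFor_of_wellFoundedLT
    (fun u ↦ u ≠ 0 ∧ u ∈ conformalCone A v) (fun u ↦ Module.finrank K (supportSpace A u))
    ⟨v, hv, mem_conformalCone_self⟩
  refine ⟨u, hu, huv, fun w hwu ↦ ?_⟩
  by_contra hspan
  have hw : w ≠ 0 := fun h ↦ hspan (h ▸ zero_mem _)
  obtain ⟨t, hconf, hlt, -⟩ := exists_sub_smul_finrank_lt hA hw hwu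
  have hne : u - t • w ≠ 0 := by
    intro h
    have hut : u = t • w := sub_eq_zero.1 h
    have ht : t ≠ 0 := fun ht ↦ hu (by rw [hut, ht, zero_smul])
    exact hspan (Submodule.mem_span_singleton.2 ⟨t⁻¹, by rw [hut, inv_smul_smul₀ ht]⟩)
  exact hlt.not_ge (hmin ⟨hne, conformalCone_le_of_mem huv hconf⟩ hlt.le)

theorem exists_conformal_decomposition [Finite ι] (hA : Function.Injective A) {S : Set V}
    (hS0 : 0 ∈ S) (hS : ∀ v ≠ 0, ∃ c ∈ S, c ≠ 0 ∧ c ∈ conformalCone A v) (r : ℕ) (v : V)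
    (hr : Module.finrank K (supportSpace A v) ≤ r) :
    ∃ (t : Fin r → K) (c : Fin r → V), (∀ i, 0 ≤ t i) ∧ (∀ i, c i ∈ S) ∧
      (∀ i, c i ∈ conformalCone A v) ∧ v = ∑ i, t i • c i := by
  have : FiniteDimensional K V := Module.Finite.of_injective A hA
  induction r generalizing v with
  | zero =>
    have hbot : supportSpace A v = ⊥ := Submodule.finrank_eq_zero.1 (Nat.le_zero.1 hr)
    have hv : v = 0 := (Submodule.mem_bot K).1 (hbot ▸ mem_supportSpace_self)
    exact ⟨0, 0, finZeroElim, finZeroElim, finZeroElim, by simp [hv]⟩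
  | succ r ih =>
    by_cases hv : v = 0
    · exact ⟨0, 0, fun _ ↦ le_rfl, fun _ ↦ hS0, fun _ ↦ zero_mem _, by simp [hv]⟩
    obtain ⟨c₀, hc₀S, hc₀, hc₀v⟩ := hS v hv
    obtain ⟨t₀, hstep, hlt, ht₀⟩ :=
      exists_sub_smul_finrank_lt hA hc₀ (mem_supportSpace_of_mem_conformalCone hc₀v)
    obtain ⟨t, c, ht, hcS, hcv, hsum⟩ := ih (v - t₀ • c₀) (by omega)
    refine ⟨Fin.cons t₀ t, Fin.cons c₀ c, Fin.cons (ht₀ hc₀v) ht, Fin.cons hc₀S hcS,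
      Fin.cons hc₀v fun i ↦ conformalCone_le_of_mem hstep (hcv i), ?_⟩
    simp only [Fin.sum_univ_succ, Fin.cons_zero, Fin.cons_succ]
    rw [← hsum, add_sub_cancel]

end ConformalDecomposition

section Minors

variable {R ρ σ : Type*} [CommRing R]

theorem injective_of_det_submatrix_ne_zero {k : ℕ} {M : Matrix ρ σ R} {r : Fin k → ρ}
    {c : Fin k → σ} (h : (M.submatrix r c).det ≠ 0) :
    Function.Injective r ∧ Function.Injective c := by
  refine ⟨fun a b hab ↦ ?_, fun a b hab ↦ ?_⟩ <;> by_contra hne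
  · exact h (det_zero_of_row_eq hne (funext fun _ ↦ by simp only [submatrix_apply, hab]))
  · exact h (det_zero_of_column_eq hne fun _ ↦ by simp only [submatrix_apply, hab])

theorem exists_maximal_nonzero_minor [Nontrivial R] [Finite σ] (M : Matrix ρ σ R) :
    ∃ (k : ℕ) (r : Fin k → ρ) (c : Fin k → σ), (M.submatrix r c).det ≠ 0 ∧
      ∀ (r' : Fin (k + 1) → ρ) (c' : Fin (k + 1) → σ), (M.submatrix r' c').det = 0 := by
  by_contra! hgrow
  have hminor (k : ℕ) : ∃ (r : Fin k → ρ) (c : Fin k → σ), (M.submatrix r c).det ≠ 0 := by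
    induction k with
    | zero => exact ⟨Fin.elim0, Fin.elim0, by simp⟩
    | succ k ih =>
      obtain ⟨r, c, h⟩ := ih
      exact hgrow k r c h
  obtain ⟨r, c, h⟩ := hminor (Nat.card σ + 1)
  have hcard := Nat.card_le_card_of_injective c (injective_of_det_submatrix_ne_zero h).2
  simp at hcard

theorem eq_zero_of_mulVec_eq_zero_of_surjective [IsDomain R] [Fintype σ] {M : Matrix ρ σ R} {k : ℕ}
    {r : Fin k → ρ} {c : Fin k → σ} (hdet : (M.submatrix r c).det ≠ 0)
    (hc : Function.Surjective c) {v : σ → R} (hv : M *ᵥ v = 0) : v = 0 := by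
  let e := Equiv.ofBijective c ⟨(injective_of_det_submatrix_ne_zero hdet).2, hc⟩
  have hker : M.submatrix r e *ᵥ (v ∘ e) = 0 := by
    rw [submatrix_mulVec_equiv, Function.comp_assoc, e.self_comp_symm, Function.comp_id, hv]
    rfl
  have hve : v ∘ e = 0 := Matrix.eq_zero_of_mulVec_eq_zero hdet hker
  exact funext (e.forall_congr_right.1 (congrFun hve))

theorem mulVec_extend_zero {τ : Type*} [Fintype σ] [Fintype τ] (M : Matrix ρ σ R) {c : τ → σ}
    (hc : Function.Injective c) (w : τ → R) :
    M *ᵥ Function.extend c w 0 = M.submatrix id c *ᵥ w := by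
  funext i
  refine (Fintype.sum_of_injective c hc _ _ (fun j hj ↦ ?_) fun l ↦ ?_).symm
  · rw [Function.extend_apply' _ _ _ hj, Pi.zero_apply, mul_zero]
  · simp only [hc.extend_apply, submatrix_apply, id]

/-- The signed maximal minors of the `k × (k + 1)` matrix `M.submatrix r c`, which by Cramer's rule
form a vector in its kernel. -/
def signedMinors {k : ℕ} (M : Matrix ρ σ R) (r : Fin k → ρ) (c : Fin (k + 1) → σ) :
    Fin (k + 1) → R :=
  fun l ↦ (-1) ^ (l : ℕ) * (M.submatrix r (c ∘ l.succAbove)).det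

theorem submatrix_mulVec_signedMinors {k : ℕ} (M : Matrix ρ σ R) (r : Fin k → ρ)
    (c : Fin (k + 1) → σ) (i : ρ) :
    (M.submatrix id c *ᵥ signedMinors M r c) i =
      (M.submatrix (Fin.cons i r : Fin (k + 1) → ρ) c).det := by
  rw [det_succ_row_zero, mulVec, dotProduct]
  refine Finset.sum_congr rfl fun l _ ↦ ?_
  have hminor : (M.submatrix (Fin.cons i r : Fin (k + 1) → ρ) c).submatrix Fin.succ l.succAbove =
      M.submatrix r (c ∘ l.succAbove) := rfl
  rw [hminor, signedMinors]
  simp only [submatrix_apply, id, Fin.cons_zero]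
  ring

theorem map_intCast_mulVec_intCast [Fintype σ] (M : Matrix ρ σ ℤ) (c : σ → ℤ) :
    M.map (Int.cast : ℤ → R) *ᵥ (Int.cast ∘ c) = Int.cast ∘ (M *ᵥ c) :=
  funext fun i ↦ (RingHom.map_mulVec (Int.castRingHom R) M c i).symm

end Minors

section SubdeterminantBound

variable {K ρ σ : Type*} [Field K] [LinearOrder K]

/-- `Δ` bounds every minor of `M` in absolute value. Repeated rows or columns contribute only zero
minors; the empty minor is included, which forces `1 ≤ Δ`. -/
def IsSubdetBound (M : Matrix ρ σ ℤ) (Δ : K) : Prop :=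
  ∀ (k : ℕ) (r : Fin k → ρ) (c : Fin k → σ), |((M.submatrix r c).det : K)| ≤ Δ

variable {M : Matrix ρ σ ℤ} {Δ : K}

theorem IsSubdetBound.submatrix {ρ' σ' : Type*} (hΔ : IsSubdetBound M Δ) (f : ρ' → ρ) (g : σ' → σ) :
    IsSubdetBound (M.submatrix f g) Δ :=
  fun k r c ↦ hΔ k (f ∘ r) (g ∘ c)

variable [IsStrictOrderedRing K]

theorem isSubdetBound_of_injective (hM : M ≠ 0)
    (hΔ : ∀ k : ℕ, 0 < k → ∀ (r : Fin k → ρ) (c : Fin k → σ), Function.Injective r →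
      Function.Injective c → |((M.submatrix r c).det : K)| ≤ Δ) :
    IsSubdetBound M Δ := by
  have hΔ1 : 1 ≤ Δ := by
    obtain ⟨i, j, hij⟩ : ∃ i j, M i j ≠ 0 := by
      by_contra! hzero
      exact hM (Matrix.ext hzero)
    have hentry : |(M i j : K)| ≤ Δ := by
      simpa using hΔ 1 one_pos (fun _ ↦ i) (fun _ ↦ j)
        (Function.injective_of_subsingleton _) (Function.injective_of_subsingleton _)
    exact le_trans (mod_cast Int.one_le_abs hij) hentry
  intro k r c
  by_cases hdet : (M.submatrix r c).det = 0
  · simpa [hdet] using zero_le_one.trans hΔ1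
  rcases k.eq_zero_or_pos with rfl | hk
  · simpa using hΔ1
  · obtain ⟨hr, hc⟩ := injective_of_det_submatrix_ne_zero hdet
    exact hΔ k hk r c hr hc

namespace IsSubdetBound

theorem nonneg (hΔ : IsSubdetBound M Δ) : 0 ≤ Δ :=
  (abs_nonneg _).trans (hΔ 0 Fin.elim0 Fin.elim0)

theorem fromRows_one [DecidableEq σ] (hΔ : IsSubdetBound M Δ) :
    IsSubdetBound (fromRows M (1 : Matrix σ σ ℤ)) Δ := by
  intro k r c
  induction k with
  | zero => simpa using hΔ 0 Fin.elim0 Fin.elim0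
  | succ k ih =>
    by_cases hdet : ((fromRows M (1 : Matrix σ σ ℤ)).submatrix r c).det = 0
    · simpa [hdet] using hΔ.nonneg
    have hc := (injective_of_det_submatrix_ne_zero hdet).2
    by_cases hr : ∃ a j, r a = Sum.inr j
    · -- Expand along the unit row `r a`.
      obtain ⟨a, j, haj⟩ := hr
      have hexpand := det_succ_row ((fromRows M (1 : Matrix σ σ ℤ)).submatrix r c) a
      obtain ⟨l, rfl⟩ : ∃ l, c l = j := by
        by_contra! hj
        refine hdet (hexpand.trans (Finset.sum_eq_zero fun l _ ↦ ?_))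
        simp [haj, (hj l).symm]
      rw [Finset.sum_eq_single_of_mem l (Finset.mem_univ l) fun l' _ hl' ↦ by
        simp [haj, hc.ne hl'.symm]] at hexpand
      rw [hexpand]
      simpa [haj, abs_mul] using ih (r ∘ a.succAbove) (c ∘ l.succAbove)
    · have hr' : ∀ a, ∃ i, r a = Sum.inl i := by
        intro a
        cases hra : r a with
        | inl i => exact ⟨i, rfl⟩
        | inr j => exact absurd ⟨a, j, hra⟩ hr
      choose r' hr' using hr'
      obtain rfl : r = Sum.inl ∘ r' := funext hr'
      exact hΔ (k + 1) r' c

end IsSubdetBound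

theorem exists_int_kernel_vector [Fintype σ] (hΔ : IsSubdetBound M Δ) {v : σ → K} (hv : v ≠ 0)
    (hMv : M.map (Int.cast : ℤ → K) *ᵥ v = 0) :
    ∃ c : σ → ℤ, c ≠ 0 ∧ M *ᵥ c = 0 ∧ ∀ j, |(c j : K)| ≤ Δ := by
  obtain ⟨k, r, c, hdet, hmax⟩ := exists_maximal_nonzero_minor M
  obtain ⟨j, hj⟩ : ∃ j, j ∉ Set.range c := by
    have hdetK : ((M.map (Int.cast : ℤ → K)).submatrix r c).det ≠ 0 := by
      rw [submatrix_map]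
      exact Int.cast_det (R := K) (M.submatrix r c) ▸ Int.cast_ne_zero.2 hdet
    by_contra! hsurj
    exact hv (eq_zero_of_mulVec_eq_zero_of_surjective hdetK hsurj hMv)
  set cols : Fin (k + 1) → σ := Fin.cons j c
  have hcols : Function.Injective cols :=
    Fin.cons_injective_iff.2 ⟨hj, (injective_of_det_submatrix_ne_zero hdet).2⟩
  refine ⟨Function.extend cols (signedMinors M r cols) 0, fun hzero ↦ ?_, ?_, fun i ↦ ?_⟩
  · have hfirst := congrFun hzero (cols 0)
    rw [hcols.extend_apply] at hfirst
    exact hdet (by simpa [signedMinors, cols, Function.comp_def] using hfirst)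
  · rw [mulVec_extend_zero M hcols]
    funext i
    rw [submatrix_mulVec_signedMinors, hmax, Pi.zero_apply]
  · by_cases hi : ∃ l, cols l = i
    · obtain ⟨l, rfl⟩ := hi
      rw [hcols.extend_apply]
      simpa [signedMinors, abs_mul] using hΔ k r (cols ∘ l.succAbove)
    · simpa [Function.extend_apply' _ _ _ hi] using hΔ.nonneg

end SubdeterminantBound

section Rounding

variable {K ι κ : Type*} [Field K] [LinearOrder K] [IsStrictOrderedRing K] [Fintype κ]

/-- An integer matrix as a linear map over a field `K`. -/
def castLin (K : Type*) [Field K] (B : Matrix ι κ ℤ) : (κ → K) →ₗ[K] ι → K :=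
  (B.map Int.cast).mulVecLin

variable {B : Matrix ι κ ℤ} {Δ : K}

theorem exists_int_mem_conformalCone [Finite ι] (hB : Function.Injective (castLin K B))
    (hΔ : IsSubdetBound B Δ) {v : κ → K} (hv : v ≠ 0) :
    ∃ c : κ → ℤ, c ≠ 0 ∧ Int.cast ∘ c ∈ conformalCone (castLin K B) v ∧ ∀ j, |(c j : K)| ≤ Δ := by
  obtain ⟨u, hu, huv, hspan⟩ := exists_conformal_minimal_support hB hv
  let zeroRow : {i // castLin K B u i = 0} → ι := Subtype.val
  obtain ⟨c, hc, hker, hcΔ⟩ := exists_int_kernel_vector (hΔ.submatrix zeroRow id) hu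
    (funext fun i ↦ i.2)
  have hcu : Int.cast ∘ c ∈ supportSpace (castLin K B) u := mem_supportSpace.2 fun i hi ↦ by
    have hrow : (B *ᵥ c) i = 0 := congrFun hker ⟨i, hi⟩
    rw [castLin, mulVecLin_apply, map_intCast_mulVec_intCast, Function.comp_apply, hrow,
      Int.cast_zero]
  obtain ⟨s, hs⟩ := Submodule.mem_span_singleton.1 (hspan hcu)
  rcases le_total 0 s with h | h
  · exact ⟨c, hc, hs ▸ PointedCone.smul_mem _ h huv, hcΔ⟩
  · refine ⟨-c, neg_ne_zero.2 hc, ?_, fun j ↦ by simpa using hcΔ j⟩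
    have hneg : (Int.cast ∘ (-c) : κ → K) = (-s) • u := by
      rw [neg_smul, hs]
      exact funext fun j ↦ Int.cast_neg (c j)
    exact hneg ▸ PointedCone.smul_mem _ (neg_nonneg.2 h) huv

theorem exists_conformal_int_rounding_of_injective [FloorRing K] [Finite ι]
    (hB : Function.Injective (castLin K B)) (hΔ : IsSubdetBound B Δ) (v : κ → K) :
    ∃ p : κ → ℤ, Int.cast ∘ p ∈ conformalCone (castLin K B) v ∧
      v - Int.cast ∘ p ∈ conformalCone (castLin K B) v ∧
      ∀ j, |v j - p j| ≤ Fintype.card κ * Δ := by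
  let S : Set (κ → K) := {z | ∃ c : κ → ℤ, z = Int.cast ∘ c ∧ ∀ j, |(c j : K)| ≤ Δ}
  have hS0 : 0 ∈ S := ⟨0, funext fun _ ↦ Int.cast_zero.symm, fun _ ↦ by simpa using hΔ.nonneg⟩
  have hS (v : κ → K) (hv : v ≠ 0) : ∃ c ∈ S, c ≠ 0 ∧ c ∈ conformalCone (castLin K B) v := by
    obtain ⟨c, hc, hcv, hcΔ⟩ := exists_int_mem_conformalCone hB hΔ hv
    refine ⟨Int.cast ∘ c, ⟨c, rfl, hcΔ⟩, fun h ↦ hc (funext fun j ↦ ?_), hcv⟩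
    exact Int.cast_eq_zero.1 (congrFun h j)
  have hrank : Module.finrank K (supportSpace (castLin K B) v) ≤ Fintype.card κ :=
    (Submodule.finrank_le _).trans_eq (Module.finrank_fintype_fun_eq_card K)
  obtain ⟨t, z, ht, hzS, hzv, hsum⟩ := exists_conformal_decomposition hB hS0 hS _ v hrank
  choose c hzc hcΔ using hzS
  have hfloor : (Int.cast ∘ ∑ i, ⌊t i⌋ • c i : κ → K) = ∑ i, (⌊t i⌋ : K) • z i := by
    funext j
    simp [hzc]
  have hfract : v - Int.cast ∘ ∑ i, ⌊t i⌋ • c i = ∑ i, Int.fract (t i) • z i := by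
    rw [hfloor, hsum, ← Finset.sum_sub_distrib]
    simp only [← sub_smul, Int.self_sub_floor]
  refine ⟨∑ i, ⌊t i⌋ • c i, ?_, ?_, fun j ↦ ?_⟩
  · rw [hfloor]
    exact sum_mem fun i _ ↦
      PointedCone.smul_mem _ (Int.cast_nonneg (Int.floor_nonneg.2 (ht i))) (hzv i)
  · rw [hfract]
    exact sum_mem fun i _ ↦ PointedCone.smul_mem _ (Int.fract_nonneg (t i)) (hzv i)
  · have hterm (i) : |Int.fract (t i) * c i j| ≤ Δ := by
      rw [abs_mul, Int.abs_fract]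
      exact (mul_le_of_le_one_left (abs_nonneg _) (Int.fract_lt_one _).le).trans (hcΔ i j)
    calc |v j - (∑ i, ⌊t i⌋ • c i) j| = |∑ i, Int.fract (t i) * c i j| := by
          simpa [hzc] using congrArg abs (congrFun hfract j)
      _ ≤ ∑ i, |Int.fract (t i) * c i j| := Finset.abs_sum_le_sum_abs _ _
      _ ≤ ∑ _ : Fin (Fintype.card κ), Δ := Finset.sum_le_sum fun i _ ↦ hterm i
      _ = Fintype.card κ * Δ := by simp

end Rounding

section IntegralityGap

variable {K ι κ : Type*} [Field K] [LinearOrder K] [IsStrictOrderedRing K] [Fintype κ]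

/-- The feasible set `{y | b + D y ≤ 0}` of the linear relaxation of an integer program. -/
def relaxedFeasible (D : Matrix ι κ ℤ) (b : ι → K) : Set (κ → K) :=
  {y | ∀ i, b i + (D.map (Int.cast : ℤ → K) *ᵥ y) i ≤ 0}

variable {D : Matrix ι κ ℤ} {b : ι → K} {d y ŷ p : κ → K} {Δ : K}

theorem add_mem_relaxedFeasible (hy : y ∈ relaxedFeasible D b) (hŷ : ŷ ∈ relaxedFeasible D b)
    (hp : p ∈ conformalCone (castLin K D) (ŷ - y))
    (hq : ŷ - y - p ∈ conformalCone (castLin K D) (ŷ - y)) :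
    y + p ∈ relaxedFeasible D b := by
  intro i
  have hpi := (hp i).2
  have hqi := (hq i).1
  simp only [castLin, map_sub, mulVecLin_apply, Pi.sub_apply] at hpi hqi
  rw [mulVec_add, Pi.add_apply]
  rcases le_total 0 ((D.map Int.cast *ᵥ ŷ) i - (D.map Int.cast *ᵥ y) i) with h | h
  · linarith [hqi h, hŷ i]
  · linarith [hpi h, hy i]

theorem dotProduct_le_sum_abs_mul {z : κ → K} {r : K} (hz : ∀ j, |z j| ≤ r) :
    d ⬝ᵥ z ≤ (∑ j, |d j|) * r := by
  rw [Finset.sum_mul]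
  refine Finset.sum_le_sum fun j _ ↦ (le_abs_self _).trans ?_
  rw [abs_mul]
  exact mul_le_mul_of_nonneg_left (hz j) (abs_nonneg _)

theorem eq_zero_of_forall_dotProduct_intCast_le {y : κ → ℤ}
    (hy : ∀ z : κ → ℤ, d ⬝ᵥ (Int.cast ∘ z) ≤ d ⬝ᵥ (Int.cast ∘ y)) : d = 0 := by
  classical
  funext j
  have hshift (s : ℤ) : d j * s ≤ 0 := by
    have hcast : (Int.cast ∘ (y + Pi.single j s) : κ → K) = Int.cast ∘ y + Pi.single j (s : K) := by
      funext l
      simp [Pi.single_apply]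
    have hle := hy (y + Pi.single j s)
    rw [hcast, dotProduct_add, dotProduct_single] at hle
    linarith
  have hpos := hshift 1
  have hneg := hshift (-1)
  push_cast at hpos hneg
  rw [Pi.zero_apply]
  linarith

variable [FloorRing K]

theorem exists_conformal_int_rounding [Finite ι] (hΔ : IsSubdetBound D Δ) (v : κ → K) :
    ∃ p : κ → ℤ, Int.cast ∘ p ∈ conformalCone (castLin K D) v ∧
      v - Int.cast ∘ p ∈ conformalCone (castLin K D) v ∧
      ∀ j, |v j - p j| ≤ Fintype.card κ * Δ := by
  classical
  let B : Matrix (ι ⊕ κ) κ ℤ := fromRows D 1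
  have hB (z : κ → K) : castLin K B z = Sum.elim (castLin K D z) z := by
    simp [castLin, B, fromRows_map, fromRows_mulVec]
  have hBinj : Function.Injective (castLin K B) := fun y z h ↦ by
    rw [hB, hB] at h
    exact funext fun j ↦ congrFun h (Sum.inr j)
  have hcone : conformalCone (castLin K B) v ≤ conformalCone (castLin K D) v := fun z hz i ↦ by
    simpa [hB] using hz (Sum.inl i)
  obtain ⟨p, hp, hq, hpΔ⟩ := exists_conformal_int_rounding_of_injective hBinj hΔ.fromRows_one v
  exact ⟨p, hcone hp, hcone hq, hpΔ⟩

theorem integrality_gap_le_of_isSubdetBound [Finite ι] (hΔ : IsSubdetBound D Δ) {y : κ → ℤ}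
    (hy : Int.cast ∘ y ∈ relaxedFeasible D b)
    (hopt : ∀ z : κ → ℤ, Int.cast ∘ z ∈ relaxedFeasible D b →
      d ⬝ᵥ (Int.cast ∘ z) ≤ d ⬝ᵥ (Int.cast ∘ y))
    (hŷ : ŷ ∈ relaxedFeasible D b) :
    d ⬝ᵥ ŷ ≤ d ⬝ᵥ (Int.cast ∘ y) + (∑ j, |d j|) * Fintype.card κ * Δ := by
  obtain ⟨p, hp, hq, hpΔ⟩ := exists_conformal_int_rounding hΔ (ŷ - Int.cast ∘ y)
  have hcast : (Int.cast ∘ (y + p) : κ → K) = Int.cast ∘ y + Int.cast ∘ p :=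
    funext fun j ↦ Int.cast_add (y j) (p j)
  have hint : d ⬝ᵥ (Int.cast ∘ (y + p)) ≤ d ⬝ᵥ (Int.cast ∘ y) :=
    hopt (y + p) (hcast ▸ add_mem_relaxedFeasible hy hŷ hp hq)
  have herr : d ⬝ᵥ (ŷ - Int.cast ∘ y - Int.cast ∘ p) ≤ (∑ j, |d j|) * (Fintype.card κ * Δ) :=
    dotProduct_le_sum_abs_mul hpΔ
  rw [hcast, dotProduct_add] at hint
  rw [dotProduct_sub, dotProduct_sub, ← mul_assoc] at herr
  linarith

theorem integrality_gap_le [Finite ι]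
    (hΔ : ∀ k : ℕ, 0 < k → ∀ (r : Fin k → ι) (c : Fin k → κ), Function.Injective r →
      Function.Injective c → |((D.submatrix r c).det : K)| ≤ Δ) {y : κ → ℤ}
    (hy : Int.cast ∘ y ∈ relaxedFeasible D b)
    (hopt : ∀ z : κ → ℤ, Int.cast ∘ z ∈ relaxedFeasible D b →
      d ⬝ᵥ (Int.cast ∘ z) ≤ d ⬝ᵥ (Int.cast ∘ y))
    (hŷ : ŷ ∈ relaxedFeasible D b) :
    d ⬝ᵥ ŷ ≤ d ⬝ᵥ (Int.cast ∘ y) + (∑ j, |d j|) * Fintype.card κ * Δ := by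
  by_cases hD : D = 0
  · have hd : d = 0 := eq_zero_of_forall_dotProduct_intCast_le fun z ↦ hopt z fun i ↦ by
      simpa [hD] using hy i
    simp [hd]
  · exact integrality_gap_le_of_isSubdetBound (isSubdetBound_of_injective hD hΔ) hy hopt hŷ

end IntegralityGap

end RelaxedForesight

open RelaxedForesight in
theorem relaxed_foresight_linear_follower_subdeterminant_guarantee_general
    {K X ι κ : Type*} [Field K] [LinearOrder K] [IsStrictOrderedRing K] [FloorRing K]
    [Finite ι] [Fintype κ] (h : X → K) (d : κ → K) (D : Matrix ι κ ℤ) (g : X → ι → K)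
    (hmax : ∀ x, ∃ ŷ ∈ relaxedFeasible D (g x), IsMaxOn (d ⬝ᵥ ·) (relaxedFeasible D (g x)) ŷ)
    (Δ : K)
    (hΔ : ∀ k : ℕ, 0 < k → ∀ (r : Fin k → ι) (c : Fin k → κ), Function.Injective r →
      Function.Injective c → |((D.submatrix r c).det : K)| ≤ Δ)
    (xstar : X) (yhstar : κ → K)
    (hyhstar : IsMaxOn (d ⬝ᵥ ·) (relaxedFeasible D (g xstar)) yhstar)
    (hleaderopt : ∀ x, ∀ ŷ ∈ relaxedFeasible D (g x),
      IsMaxOn (d ⬝ᵥ ·) (relaxedFeasible D (g x)) ŷ → h xstar + d ⬝ᵥ yhstar ≤ h x + d ⬝ᵥ ŷ)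
    (ystar : κ → K) (hystar : ystar ∈ relaxedFeasible D (g xstar))
    (x : X) (y : κ → ℤ) (hy : Int.cast ∘ y ∈ relaxedFeasible D (g x))
    (hopt : ∀ z : κ → ℤ, Int.cast ∘ z ∈ relaxedFeasible D (g x) →
      d ⬝ᵥ (Int.cast ∘ z) ≤ d ⬝ᵥ (Int.cast ∘ y)) :
    h xstar + d ⬝ᵥ ystar ≤
      h x + d ⬝ᵥ (Int.cast ∘ y) + (∑ j, |d j|) * Fintype.card κ * Δ := by
  obtain ⟨ŷ, hŷ, hŷmax⟩ := hmax x
  calc h xstar + d ⬝ᵥ ystar ≤ h xstar + d ⬝ᵥ yhstar := by gcongr; exact hyhstar hystar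
    _ ≤ h x + d ⬝ᵥ ŷ := hleaderopt x ŷ hŷ hŷmax
    _ ≤ h x + (d ⬝ᵥ (Int.cast ∘ y) + (∑ j, |d j|) * Fintype.card κ * Δ) := by
      gcongr
      exact integrality_gap_le hΔ hy hopt hŷ
    _ = _ := (add_assoc _ _ _).symm

/-- Approximation guarantee for the Relaxed Foresight Algorithm with an
integer-linear follower (few variables, many constraints): the leader's value
obtained by the algorithm exceeds the value of any bilevel-feasible
leader–follower pair by at most `2 * ‖d‖₁ * n_y * Δ(D)`, where `Δ(D)` bounds
the absolute values of all subdeterminants of the integral matrix `D`. -/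
theorem relaxed_foresight_linear_follower_subdeterminant_guarantee
    (nx ny m : ℕ) (hnx : 0 < nx) (hny : 0 < ny) (hm : 0 < m)
    -- leader's decisions
    (X : Type) (hX : Nonempty X)
    (h : X → ℝ)
    -- follower's (and leader's, negated) linear objective
    (d : Fin ny → ℝ)
    -- follower's constraint data: integral matrix `D`, integer-valued `g`
    (D : Matrix (Fin m) (Fin ny) ℤ)
    (g : X → Fin m → ℤ)
    -- follower's relaxed feasible set `P x = {y | g x + D y ≤ 0}`
    (P : X → Set (Fin ny → ℝ))
    (hP : ∀ x, P x = {y : Fin ny → ℝ |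
      ∀ i, (g x i : ℝ) + (D.map (Int.cast : ℤ → ℝ)).mulVec y i ≤ 0})
    -- integrality predicate
    (IsInt : (Fin ny → ℝ) → Prop)
    (hIsInt : ∀ y, IsInt y ↔ ∀ i, ∃ w : ℤ, y i = (w : ℝ))
    -- for every `x`, the integer feasible set is nonempty and both the relaxed
    -- and the integer linear program attain finite maxima
    (hfeas : ∀ x : X, ∃ y, IsInt y ∧ y ∈ P x)
    (hmaxR : ∀ x : X, ∃ yh ∈ P x, ∀ y ∈ P x, d ⬝ᵥ y ≤ d ⬝ᵥ yh)
    (hmaxZ : ∀ x : X, ∃ yt, IsInt yt ∧ yt ∈ P x ∧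
      ∀ y, IsInt y → y ∈ P x → d ⬝ᵥ y ≤ d ⬝ᵥ yt)
    -- `Δ` bounds the absolute value of every (nonempty) subdeterminant of `D`
    (Δ : ℝ)
    (hΔ : ∀ (k : ℕ), 0 < k → ∀ (ri : Fin k → Fin m) (ci : Fin k → Fin ny),
      Function.Injective ri → Function.Injective ci →
      |(((D.submatrix ri ci).det : ℤ) : ℝ)| ≤ Δ)
    -- `x*, ŷ*` solve the follower-relaxed bilevel problem
    (xstar : X) (yhstar : Fin ny → ℝ)
    (hyhstar : yhstar ∈ P xstar ∧ ∀ y ∈ P xstar, d ⬝ᵥ y ≤ d ⬝ᵥ yhstar)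
    (hleaderopt : ∀ x : X, ∀ yh ∈ P x, (∀ y ∈ P x, d ⬝ᵥ y ≤ d ⬝ᵥ yh) →
      h xstar + d ⬝ᵥ yhstar ≤ h x + d ⬝ᵥ yh)
    -- `y*` maximizes `dᵀy` over `P(x*) ∩ ℤ^{n_y}`
    (ystar : Fin ny → ℝ)
    (hystar : IsInt ystar ∧ ystar ∈ P xstar ∧
      ∀ y, IsInt y → y ∈ P xstar → d ⬝ᵥ y ≤ d ⬝ᵥ ystar) :
    ∀ x : X, ∀ y : Fin ny → ℝ, IsInt y → y ∈ P x →
      (∀ z, IsInt z → z ∈ P x → d ⬝ᵥ z ≤ d ⬝ᵥ y) →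
      h xstar + d ⬝ᵥ ystar ≤ h x + d ⬝ᵥ y + 2 * (∑ i, |d i|) * ny * Δ := by
  intro x y hyI hyP hyopt
  obtain rfl : P = fun x ↦ RelaxedForesight.relaxedFeasible D fun i ↦ (g x i : ℝ) := funext hP
  choose z hz using (hIsInt y).1 hyI
  obtain rfl : y = Int.cast ∘ z := funext hz
  have hΔ0 : 0 ≤ Δ := (abs_nonneg _).trans (hΔ 1 one_pos (fun _ ↦ ⟨0, hm⟩) (fun _ ↦ ⟨0, hny⟩)
    (Function.injective_of_subsingleton _) (Function.injective_of_subsingleton _))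
  have hbound := relaxed_foresight_linear_follower_subdeterminant_guarantee_general h d D
    (fun x i ↦ (g x i : ℝ)) hmaxR Δ hΔ xstar yhstar hyhstar.2 hleaderopt ystar hystar.2.1 x z hyP
    fun w hw ↦ hyopt _ ((hIsInt _).2 fun i ↦ ⟨w i, rfl⟩) hw
  rw [Fintype.card_fin] at hbound
  have herror : 0 ≤ (∑ i, |d i|) * ny * Δ := by positivity
  linarith
end

section
/- Approximation guarantee for the Relaxed Foresight Algorithm with an integer-linear follower (many variables, few constraints): for every leader decision x ∈ X and every maximizer y of dᵀy over P(x) ∩ ℤ^{n_y}, the leader's value obtained by the algorithm satisfies h(x*) + dᵀy* ≤ h(x) + dᵀy + 2·‖d‖_∞·m·(2·m·δ(D) + 1)^m. In particular, the algorithm's leader objective exceeds the optimal leader objective of the bilevel program by at most 2·‖d‖_∞·m·(2·m·δ(D) + 1)^m. -/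
open Matrix BigOperators

/-!
For each `x` the relaxed optimum of the follower is at least the integer optimum, and `x*` is
optimal for the relaxed values, so the loss against `x` is at most the integrality gap of the
follower at `x`.

The gap is bounded by the proximity argument of Eisenbrand and Weismantel. After adding slacks,
round the relaxed solution within its unit cell, without loss of objective or of the equality
constraints, to a point with at most `m` fractional coordinates. The constraint matrix kills its
difference from an integer optimum `z`, which thus writes zero as a sum of signed columns: one for
each unit step of the integral part `q` of the difference, and at most `m` scaled ones for the
fractional part. By the Steinitz lemma these columns can be ordered so
that all partial sums stay in a cube of side `2 m δ`. If there are many, two partial sums that use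
the same fractional columns fall in one half-open unit cell; their difference is integral, hence
zero, and gives a kernel vector `u ≠ 0` that is conformal to `q`, that is, `u ∈ Set.uIcc 0 q`.
Moving from `z` along such vectors keeps feasibility and cannot improve the optimum, so only the
short rest of the difference, which contains no such vector, contributes to the gap.
-/

section ExtremePoints

theorem exists_mem_extremePoints_isMaxOn {E : Type*} [AddCommGroup E] [Module ℝ E]
    [TopologicalSpace E] [T2Space E] [IsTopologicalAddGroup E] [ContinuousSMul ℝ E]
    [LocallyConvexSpace ℝ E] {K : Set E} (hK : IsCompact K) (hne : K.Nonempty)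
    (f : StrongDual ℝ E) : ∃ x ∈ K.extremePoints ℝ, IsMaxOn f K x := by
  have hexp : IsExposed ℝ K (f.toExposed K) := ContinuousLinearMap.toExposed.isExposed
  obtain ⟨z, hzK, hz⟩ := hK.exists_isMaxOn hne f.continuous.continuousOn
  obtain ⟨x, hx⟩ := (hexp.isCompact hK).extremePoints_nonempty ⟨z, hzK, hz⟩
  exact ⟨x, hexp.isExtreme.extremePoints_subset_extremePoints hx, hx.1.2⟩

variable {ι V : Type*} [AddCommGroup V] [Module ℝ V] {l u x : ι → ℝ}

theorem eventually_add_smul_mem_Icc [Finite ι] {g : ι → ℝ} (hx : x ∈ Set.Icc l u)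
    (hg : ∀ j, g j ≠ 0 → l j < x j ∧ x j < u j) :
    ∀ᶠ t : ℝ in nhds 0, x + t • g ∈ Set.Icc l u := by
  have hcoord : ∀ j, ∀ᶠ t : ℝ in nhds 0, x j + t * g j ∈ Set.Icc (l j) (u j) := by
    intro j
    by_cases hj : g j = 0
    · simpa [hj] using ⟨hx.1 j, hx.2 j⟩
    · have hcont : ContinuousAt (fun t : ℝ ↦ x j + t * g j) 0 := by fun_prop
      exact hcont.eventually_mem (by simpa using Icc_mem_nhds (hg j hj).1 (hg j hj).2)
  filter_upwards [Filter.eventually_all.2 hcoord] with t ht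
  exact ⟨fun j ↦ (ht j).1, fun j ↦ (ht j).2⟩

theorem eq_zero_of_mem_extremePoints_Icc [Finite ι] {L : (ι → ℝ) →ₗ[ℝ] V} {v : V}
    (hx : x ∈ (Set.Icc l u ∩ L ⁻¹' {v}).extremePoints ℝ) {g : ι → ℝ} (hL : L g = 0)
    (hg : ∀ j, g j ≠ 0 → l j < x j ∧ x j < u j) : g = 0 := by
  obtain ⟨⟨hbox, hxv⟩, hext⟩ := mem_extremePoints_iff_left.1 hx
  obtain ⟨ε, hε, hmem⟩ :=
    Metric.eventually_nhds_iff_ball.1 (eventually_add_smul_mem_Icc hbox hg)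
  have hmove : ∀ t ∈ Metric.ball (0 : ℝ) ε, x + t • g ∈ Set.Icc l u ∩ L ⁻¹' {v} := fun t ht ↦
    ⟨hmem t ht, by simpa [hL] using hxv⟩
  have hfix := hext _ (hmove (ε / 2) (by simp [abs_of_pos, hε]))
    _ (hmove (-(ε / 2)) (by simp [abs_of_pos, hε]))
    ⟨1 / 2, 1 / 2, by norm_num, by norm_num, by norm_num, by module⟩
  simpa [hε.ne'] using hfix

variable [Fintype ι]

theorem card_le_finrank_of_mem_extremePoints_Icc [FiniteDimensional ℝ V]
    {L : (ι → ℝ) →ₗ[ℝ] V} {v : V} (hx : x ∈ (Set.Icc l u ∩ L ⁻¹' {v}).extremePoints ℝ) :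
    ({j | l j < x j ∧ x j < u j} : Finset ι).card ≤ Module.finrank ℝ V := by
  set F : Finset ι := {j | l j < x j ∧ x j < u j}
  let extend := Function.ExtendByZero.linearMap ℝ ((↑) : F → ι)
  have hinj : Function.Injective (L ∘ₗ extend) := by
    rw [← LinearMap.ker_eq_bot, LinearMap.ker_eq_bot']
    intro g hg
    have hzero : extend g = 0 := eq_zero_of_mem_extremePoints_Icc hx hg fun j hj ↦ by
      by_contra hjF
      refine hj (Function.extend_apply' _ _ _ ?_)
      rintro ⟨k, rfl⟩
      exact hjF (Finset.mem_filter.1 k.2).2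
    ext k
    simpa [extend, Subtype.val_injective.extend_apply] using congrFun hzero k
  simpa using LinearMap.finrank_le_finrank_of_injective hinj

theorem exists_mem_Icc_card_le_finrank [FiniteDimensional ℝ V] (L : (ι → ℝ) →ₗ[ℝ] V)
    (c : ι → ℝ) (hx : x ∈ Set.Icc l u) :
    ∃ y ∈ Set.Icc l u, L y = L x ∧ c ⬝ᵥ x ≤ c ⬝ᵥ y ∧
      ({j | l j < y j ∧ y j < u j} : Finset ι).card ≤ Module.finrank ℝ V := by
  have hclosed : IsClosed (L ⁻¹' {L x}) := by
    have hpre : L ⁻¹' {L x} = (· - x) ⁻¹' (LinearMap.ker L : Set (ι → ℝ)) := by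
      ext y
      simp [sub_eq_zero]
    rw [hpre]
    exact (LinearMap.ker L).closed_of_finiteDimensional.preimage (by fun_prop)
  obtain ⟨y, hy, hmax⟩ := exists_mem_extremePoints_isMaxOn (isCompact_Icc.inter_right hclosed)
    ⟨x, hx, rfl⟩ (LinearMap.toContinuousLinearMap (dotProductBilin ℝ ℝ c))
  exact ⟨y, hy.1.1, hy.1.2, by simpa using hmax ⟨hx, rfl⟩,
    card_le_finrank_of_mem_extremePoints_Icc hy⟩

theorem exists_rounding_card_fract_le_finrank [FiniteDimensional ℝ V] (L : (ι → ℝ) →ₗ[ℝ] V)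
    (c x : ι → ℝ) :
    ∃ y : ι → ℝ, (∀ j, y j ∈ Set.Icc (⌊x j⌋ : ℝ) ⌈x j⌉) ∧ L y = L x ∧ c ⬝ᵥ x ≤ c ⬝ᵥ y ∧
      ({j | Int.fract (y j) ≠ 0} : Finset ι).card ≤ Module.finrank ℝ V := by
  obtain ⟨y, hy, hLy, hcy, hcard⟩ := exists_mem_Icc_card_le_finrank L c
    (l := fun j ↦ (⌊x j⌋ : ℝ)) (u := fun j ↦ (⌈x j⌉ : ℝ))
    ⟨fun j ↦ Int.floor_le (x j), fun j ↦ Int.le_ceil (x j)⟩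
  refine ⟨y, fun j ↦ ⟨hy.1 j, hy.2 j⟩, hLy, hcy, (Finset.card_le_card ?_).trans hcard⟩
  refine Finset.monotone_filter_right _ fun j _ hj ↦ ⟨(hy.1 j).lt_of_ne ?_, (hy.2 j).lt_of_ne ?_⟩
  · intro hfloor
    exact hj (by simp [← hfloor])
  · intro hceil
    exact hj (by simp [hceil])

end ExtremePoints

section Steinitz

/-- `T` carries weights in `[0, 1]` with total at least `#T - dim V` under which the vectors `w k`
cancel. This is the invariant under which a Steinitz ordering is built backwards from the full
set. -/
def IsSteinitzBalanced {κ V : Type*} [Fintype κ] [AddCommGroup V] [Module ℝ V] (w : κ → V)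
    (T : Finset κ) : Prop :=
  ∃ l ∈ Set.Icc (0 : κ → ℝ) ((T : Set κ).indicator 1), ∑ k, l k • w k = 0 ∧
    (T.card : ℝ) ≤ Module.finrank ℝ V + ∑ k, l k

theorem eq_zero_of_mem_Icc_indicator {κ : Type*} {T : Finset κ} {l : κ → ℝ}
    (hl : l ∈ Set.Icc 0 ((T : Set κ).indicator 1)) {k : κ} (hk : k ∉ T) : l k = 0 :=
  le_antisymm (by simpa [hk] using hl.2 k) (hl.1 k)

theorem le_one_of_mem_Icc_indicator {κ : Type*} {T : Finset κ} {l : κ → ℝ}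
    (hl : l ∈ Set.Icc 0 ((T : Set κ).indicator 1)) (k : κ) : l k ≤ 1 :=
  (hl.2 k).trans (Set.indicator_le_self' (fun _ _ ↦ zero_le_one) k)

theorem IsSteinitzBalanced.norm_sum_le {κ V : Type*} [Fintype κ] [SeminormedAddCommGroup V]
    [NormedSpace ℝ V] {w : κ → V} {T : Finset κ} (hT : IsSteinitzBalanced w T) {Δ : ℝ}
    (hΔ : 0 ≤ Δ) (hw : ∀ k, ‖w k‖ ≤ Δ) : ‖∑ k ∈ T, w k‖ ≤ Module.finrank ℝ V * Δ := by
  obtain ⟨l, hl, hcancel, htotal⟩ := hT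
  have hl1 := le_one_of_mem_Icc_indicator hl
  have hcancelT : ∑ k ∈ T, l k • w k = 0 := by
    rw [← hcancel]
    exact Finset.sum_subset T.subset_univ fun k _ hk ↦ by
      rw [eq_zero_of_mem_Icc_indicator hl hk, zero_smul]
  have htotalT : ∑ k ∈ T, l k = ∑ k, l k :=
    Finset.sum_subset T.subset_univ fun k _ ↦ eq_zero_of_mem_Icc_indicator hl
  calc ‖∑ k ∈ T, w k‖ = ‖∑ k ∈ T, (1 - l k) • w k‖ := by
        simp only [sub_smul, one_smul, Finset.sum_sub_distrib, hcancelT, sub_zero]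
    _ ≤ ∑ k ∈ T, (1 - l k) * Δ := norm_sum_le_of_le _ fun k _ ↦ by
        rw [norm_smul, Real.norm_of_nonneg (sub_nonneg.2 (hl1 k))]
        exact mul_le_mul_of_nonneg_left (hw k) (sub_nonneg.2 (hl1 k))
    _ = (T.card - ∑ k, l k) * Δ := by
        rw [← Finset.sum_mul, Finset.sum_sub_distrib, htotalT]
        simp
    _ ≤ Module.finrank ℝ V * Δ := by
        gcongr
        linarith

theorem exists_eq_zero_of_card_fractional_add_sum_le {κ : Type*} [Fintype κ] {T : Finset κ}
    {l : κ → ℝ} (hl : l ∈ Set.Icc 0 ((T : Set κ).indicator 1))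
    (hfrac : ({k | 0 < l k ∧ l k < (T : Set κ).indicator 1 k} : Finset κ).card + ∑ k, l k ≤ T.card)
    (hlt : ∑ k, l k < T.card) : ∃ k ∈ T, l k = 0 := by
  classical
  by_contra! hne
  set F : Finset κ := {k | 0 < l k ∧ l k < (T : Set κ).indicator 1 k}
  have hFT : F ⊆ T := fun k hk ↦ by
    by_contra hkT
    simp [F, hkT, eq_zero_of_mem_Icc_indicator hl hkT] at hk
  have hone : ∀ k ∈ T \ F, l k = 1 := by
    intro k hk
    rw [Finset.mem_sdiff] at hk
    have hpos := (hl.1 k).lt_of_ne' (hne k hk.1)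
    by_contra h1
    exact hk.2 (by simpa [F, hk.1] using ⟨hpos, (le_one_of_mem_Icc_indicator hl k).lt_of_ne h1⟩)
  have htotal : ∑ k, l k = T.card - F.card + ∑ k ∈ F, l k := by
    rw [← Finset.sum_subset T.subset_univ fun k _ ↦ eq_zero_of_mem_Icc_indicator hl,
      ← Finset.sum_sdiff hFT, Finset.sum_congr rfl hone]
    simp [Finset.cast_card_sdiff hFT]
  rcases F.eq_empty_or_nonempty with hF | hF
  · simp [htotal, hF] at hlt
  · have := Finset.sum_pos (fun k hk ↦ (Finset.mem_filter.1 hk).2.1) hF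
    linarith

theorem IsSteinitzBalanced.of_card_le {κ V : Type*} [Fintype κ] [AddCommGroup V] [Module ℝ V]
    (w : κ → V) {T : Finset κ} (hT : T.card ≤ Module.finrank ℝ V) : IsSteinitzBalanced w T :=
  ⟨0, ⟨le_rfl, Set.indicator_nonneg fun _ _ ↦ zero_le_one⟩, by simp, by simpa using hT⟩

theorem IsSteinitzBalanced.exists_erase {κ V : Type*} [Fintype κ] [DecidableEq κ]
    [AddCommGroup V] [Module ℝ V] [FiniteDimensional ℝ V] {w : κ → V} {T : Finset κ}
    (hT : IsSteinitzBalanced w T) (hne : T.Nonempty) :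
    ∃ k ∈ T, IsSteinitzBalanced w (T.erase k) := by
  rcases le_or_gt T.card (Module.finrank ℝ V) with hcard | hcard
  · obtain ⟨k, hk⟩ := hne
    exact ⟨k, hk, .of_card_le w ((Finset.card_erase_le).trans hcard)⟩
  obtain ⟨l, hl, hcancel, htotal⟩ := hT
  have hcard' : (Module.finrank ℝ V : ℝ) + 1 ≤ T.card := by exact_mod_cast hcard
  set s : ℝ := (T.card - 1 - Module.finrank ℝ V) / ∑ k, l k with hs
  have hs0 : 0 ≤ s := div_nonneg (by linarith) (by linarith)
  have hs1 : s ≤ 1 := div_le_one_of_le₀ (by linarith) (by linarith)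
  have hsl : s • l ∈ Set.Icc 0 ((T : Set κ).indicator 1) :=
    ⟨smul_nonneg hs0 hl.1, (smul_le_of_le_one_left hl.1 hs1).trans hl.2⟩
  -- Lower the total by one, then pass to a vertex: it has at most `dim V + 1` fractional weights,
  -- too few to make up the missing `dim V + 1` unless some weight on `T` vanishes.
  obtain ⟨l', hl', hL, -, hfrac⟩ := exists_mem_Icc_card_le_finrank
    ((Fintype.linearCombination ℝ w).prod (dotProductBilin ℝ ℝ 1)) 0 hsl
  have hcancel' : ∑ k, l' k • w k = 0 := by
    simpa [Fintype.linearCombination_apply, hcancel, mul_smul, ← Finset.smul_sum]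
      using congrArg Prod.fst hL
  have htotal' : ∑ k, l' k = T.card - 1 - Module.finrank ℝ V := by
    have hrescale : ∑ k, l' k = s * ∑ k, l k := by simpa [dotProduct] using congrArg Prod.snd hL
    rw [hrescale, hs, div_mul_cancel₀ _ (by linarith)]
  have hfrac' : (({k | 0 < l' k ∧ l' k < (T : Set κ).indicator 1 k} : Finset κ).card : ℝ) ≤
      Module.finrank ℝ V + 1 := by
    rw [Module.finrank_prod, Module.finrank_self] at hfrac
    exact_mod_cast hfrac
  obtain ⟨k, hk, hk0⟩ := exists_eq_zero_of_card_fractional_add_sum_le hl'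
    (by linarith) (by linarith)
  refine ⟨k, hk, l', ⟨hl'.1, fun i ↦ ?_⟩, hcancel', ?_⟩
  · rcases eq_or_ne i k with rfl | hik
    · simp [hk0]
    · simpa [Set.indicator_apply, hik] using hl'.2 i
  · rw [Finset.cast_card_erase_of_mem hk]
    linarith

theorem exists_monotone_card_eq_of_forall_exists_erase {κ : Type*} [DecidableEq κ]
    {p : Finset κ → Prop} (hp : ∀ T, p T → T.Nonempty → ∃ k ∈ T, p (T.erase k)) {T : Finset κ}
    (hT : p T) : ∃ S : ℕ → Finset κ, Monotone S ∧ ∀ n ≤ T.card, (S n).card = n ∧ p (S n) := by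
  have hpred : ∀ R : {R // p R}, ∃ R' : {R // p R}, R' ≤ R ∧ R'.1.card = R.1.card - 1 := by
    rintro ⟨R, hR⟩
    rcases R.eq_empty_or_nonempty with rfl | hne
    · exact ⟨⟨∅, hR⟩, le_rfl, rfl⟩
    · obtain ⟨k, hk, hRk⟩ := hp R hR hne
      exact ⟨⟨R.erase k, hRk⟩, R.erase_subset k, Finset.card_erase_of_mem hk⟩
  choose pred hle hcard using hpred
  have hiter : ∀ i, (pred^[i] ⟨T, hT⟩).1.card = T.card - i := by
    intro i
    induction i with
    | zero => rfl
    | succ i ih => rw [Function.iterate_succ_apply', hcard, ih, Nat.sub_sub]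
  refine ⟨fun n ↦ (pred^[T.card - n] ⟨T, hT⟩).1, fun a b hab ↦ ?_, fun n hn ↦ ⟨?_, Subtype.prop _⟩⟩
  · exact Function.antitone_iterate_of_le_id hle (Nat.sub_le_sub_left hab _) ⟨T, hT⟩
  · rw [hiter, Nat.sub_sub_self hn]

/-- The **Steinitz lemma**. The reordering is encoded by the chain `S` of its initial segments. -/
theorem steinitz {κ V : Type*} [Fintype κ] [SeminormedAddCommGroup V] [NormedSpace ℝ V]
    [FiniteDimensional ℝ V] {w : κ → V} (hsum : ∑ k, w k = 0) {Δ : ℝ} (hΔ : 0 ≤ Δ)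
    (hw : ∀ k, ‖w k‖ ≤ Δ) :
    ∃ S : ℕ → Finset κ, Monotone S ∧ ∀ n ≤ Fintype.card κ, (S n).card = n ∧
      ‖∑ k ∈ S n, w k‖ ≤ Module.finrank ℝ V * Δ := by
  classical
  have huniv : IsSteinitzBalanced w Finset.univ :=
    ⟨1, ⟨zero_le_one, by simp⟩, by simpa using hsum, by simp⟩
  obtain ⟨S, hmono, hS⟩ :=
    exists_monotone_card_eq_of_forall_exists_erase (fun _ hT hne ↦ hT.exists_erase hne) huniv
  exact ⟨S, hmono, fun n hn ↦ ⟨(hS n hn).1, (hS n hn).2.norm_sum_le hΔ hw⟩⟩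

end Steinitz

section ZeroSum

theorem exists_lt_eq_norm_sub_lt_one {ρ : Type*} [Fintype ρ] {N R : ℕ} {r : ℕ → ℕ}
    {p : ℕ → ρ → ℝ} {B : ℝ} (hr : ∀ n ≤ N, r n ≤ R) (hp : ∀ n ≤ N, ‖p n‖ ≤ B)
    (hN : (R + 1) * (2 * B + 1) ^ Fintype.card ρ < (N + 1 : ℝ)) :
    ∃ a b, a < b ∧ b ≤ N ∧ r a = r b ∧ ‖p b - p a‖ < 1 := by
  classical
  have hB : 0 ≤ B := (norm_nonneg _).trans (hp 0 N.zero_le)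
  let cell : ℕ → ρ → ℕ := fun n i ↦ ⌊p n i + B⌋₊
  have hshift : ∀ n ≤ N, ∀ i, 0 ≤ p n i + B ∧ p n i + B ≤ 2 * B := fun n hn i ↦ by
    have := abs_le.1 ((norm_le_pi_norm (p n) i).trans (hp n hn))
    constructor <;> linarith
  have hmaps : ∀ n ∈ Finset.range (N + 1), (r n, cell n) ∈ Finset.range (R + 1) ×ˢ
      Fintype.piFinset fun _ : ρ ↦ Finset.range (⌊2 * B⌋₊ + 1) := by
    intro n hn
    have hnN : n ≤ N := Finset.mem_range_succ_iff.1 hn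
    simpa [Nat.lt_succ_iff, hr n hnN] using fun i ↦ Nat.floor_le_floor (hshift n hnN i).2
  have hcells : (R + 1) * (⌊2 * B⌋₊ + 1) ^ Fintype.card ρ < N + 1 := by
    have hfloor : ((⌊2 * B⌋₊ : ℕ) : ℝ) ≤ 2 * B := Nat.floor_le (by positivity)
    have : ((R : ℝ) + 1) * (⌊2 * B⌋₊ + 1) ^ Fintype.card ρ < N + 1 := lt_of_le_of_lt (by gcongr) hN
    exact_mod_cast this
  obtain ⟨a, ha, b, hb, hab, heq⟩ := Finset.exists_ne_map_eq_of_card_lt_of_maps_to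
    (by simpa using hcells) hmaps
  wlog hlt : a < b generalizing a b
  · exact this b hb a ha hab.symm heq.symm (hab.lt_or_gt.resolve_left hlt)
  rw [Finset.mem_range_succ_iff] at ha hb
  obtain ⟨hrab, hcell⟩ := Prod.mk.inj heq
  refine ⟨a, b, hlt, hb, hrab, (pi_norm_lt_iff one_pos).2 fun i ↦ ?_⟩
  have hfloor : ⌊p b i + B⌋ = ⌊p a i + B⌋ := by
    rw [← Int.natCast_floor_eq_floor (hshift b hb i).1,
      ← Int.natCast_floor_eq_floor (hshift a ha i).1]
    exact_mod_cast (congrFun hcell i).symm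
  simpa using Int.abs_sub_lt_one_of_floor_eq_floor hfloor

theorem sum_sub_sum_eq_sum_toRight_sdiff {α τ M : Type*} [DecidableEq τ] [AddCommGroup M]
    {S T : Finset (α ⊕ τ)} (hST : S ⊆ T) (hleft : S.toLeft = T.toLeft) (g : α ⊕ τ → M) :
    ∑ k ∈ T, g k - ∑ k ∈ S, g k = ∑ t ∈ T.toRight \ S.toRight, g (Sum.inr t) := by
  rw [Finset.sum_sum_eq_sum_toLeft_add_sum_toRight, Finset.sum_sum_eq_sum_toLeft_add_sum_toRight,
    hleft, Finset.sum_sdiff_eq_sub (Finset.toRight_subset_toRight hST), add_sub_add_left_eq_sub]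

theorem eq_zero_of_norm_intCast_lt_one {ρ : Type*} [Fintype ρ] {v : ρ → ℤ}
    (hv : ‖(Int.cast ∘ v : ρ → ℝ)‖ < 1) : v = 0 := by
  ext i
  have hi : |(v i : ℝ)| < 1 := (pi_norm_lt_iff one_pos).1 hv i
  exact Int.abs_lt_one_iff.1 (by exact_mod_cast hi)

theorem exists_nonempty_sum_eq_zero {α τ ρ : Type*} [Fintype α] [Fintype τ] [Fintype ρ]
    {f : α → ρ → ℝ} {b : τ → ρ → ℤ} {Δ : ℝ} (hΔ : 0 ≤ Δ) (hf : ∀ a, ‖f a‖ ≤ Δ)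
    (hb : ∀ t, ‖b t‖ ≤ Δ) (hsum : ∑ a, f a + ∑ t, (Int.cast ∘ b t : ρ → ℝ) = 0)
    (hcard : (Fintype.card α + 1) * (2 * Fintype.card ρ * Δ + 1) ^ Fintype.card ρ <
      (Fintype.card α + Fintype.card τ + 1 : ℝ)) :
    ∃ C : Finset τ, C.Nonempty ∧ ∑ t ∈ C, b t = 0 := by
  classical
  let w : α ⊕ τ → ρ → ℝ := Sum.elim f fun t ↦ Int.cast ∘ b t
  have hw : ∀ k, ‖w k‖ ≤ Δ := by
    rintro (a | t)
    · exact hf a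
    · refine (pi_norm_le_iff_of_nonneg hΔ).2 fun i ↦ ?_
      simpa [w, Int.norm_eq_abs] using (norm_le_pi_norm (b t) i).trans (hb t)
  obtain ⟨S, hmono, hS⟩ := steinitz (by simpa [w] using hsum) hΔ hw
  rw [Module.finrank_fintype_fun_eq_card, Fintype.card_sum] at hS
  obtain ⟨m, n, hmn, hn, hleft, hclose⟩ := exists_lt_eq_norm_sub_lt_one
    (r := fun n ↦ (S n).toLeft.card) (fun n _ ↦ Finset.card_le_univ _) (fun n hn ↦ (hS n hn).2)
    (by simpa [mul_assoc] using hcard)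
  have hsub : S m ⊆ S n := hmono hmn.le
  have hleft' : (S m).toLeft = (S n).toLeft :=
    Finset.eq_of_subset_of_card_le (Finset.toLeft_subset_toLeft hsub) hleft.ge
  refine ⟨(S n).toRight \ (S m).toRight, ?_, eq_zero_of_norm_intCast_lt_one ?_⟩
  · have hm := Finset.card_toLeft_add_card_toRight (u := S m)
    have hn' := Finset.card_toLeft_add_card_toRight (u := S n)
    rw [(hS m (hmn.le.trans hn)).1] at hm
    rw [(hS n hn).1] at hn'
    exact Finset.sdiff_nonempty_of_card_lt_card (by omega)
  · convert hclose using 2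
    rw [sum_sub_sum_eq_sum_toRight_sdiff hsub hleft']
    ext i
    simp [w]

end ZeroSum

section ConformalReduction

theorem sub_mem_uIcc_zero {ι : Type*} {u q : ι → ℤ} (hu : u ∈ Set.uIcc 0 q) :
    q - u ∈ Set.uIcc 0 q := by
  rw [← Set.pi_univ_uIcc] at hu ⊢
  intro j hj
  have := hu j hj
  simp only [Set.mem_uIcc, Pi.zero_apply, Pi.sub_apply] at this ⊢
  omega

theorem sum_natAbs_sub_lt {ι : Type*} [Fintype ι] {u q : ι → ℤ} (hu : u ∈ Set.uIcc 0 q)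
    (hne : u ≠ 0) : ∑ j, ((q - u) j).natAbs < ∑ j, (q j).natAbs := by
  rw [← Set.pi_univ_uIcc] at hu
  have hcoord : ∀ j, 0 ≤ u j ∧ u j ≤ q j ∨ q j ≤ u j ∧ u j ≤ 0 := fun j ↦
    Set.mem_uIcc.1 (hu j trivial)
  obtain ⟨j₀, hj₀⟩ := Function.ne_iff.1 hne
  refine Finset.sum_lt_sum (fun j _ ↦ ?_) ⟨j₀, Finset.mem_univ _, ?_⟩
  · have := hcoord j
    simp only [Pi.sub_apply]
    omega
  · have := hcoord j₀
    simp only [Pi.sub_apply, Pi.zero_apply] at hj₀ ⊢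
    omega

/-- `Σ j, Fin (q j).natAbs` lists the signed unit steps of a lattice path from `0` to `q`. -/
theorem exists_mem_uIcc_sum_sign_smul_eq {ι M : Type*} [Fintype ι] [AddCommGroup M] {q : ι → ℤ}
    {C : Finset (Σ j, Fin (q j).natAbs)} (hC : C.Nonempty) (a : ι → M) :
    ∃ u ∈ Set.uIcc 0 q, u ≠ 0 ∧ ∑ p ∈ C, (q p.1).sign • a p.1 = ∑ j, u j • a j := by
  classical
  let fiber : ∀ j, Finset (Fin (q j).natAbs) := fun j ↦ {i | ⟨j, i⟩ ∈ C}
  have hCfiber : C = Finset.univ.sigma fiber := by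
    ext ⟨j, i⟩
    simp [fiber]
  have hfiber : ∀ j, (fiber j).card ≤ (q j).natAbs := fun j ↦ by
    simpa using (fiber j).card_le_univ
  refine ⟨fun j ↦ (fiber j).card * (q j).sign, ?_, ?_, ?_⟩
  · rw [← Set.pi_univ_uIcc]
    intro j _
    have := hfiber j
    rw [Set.mem_uIcc]
    rcases lt_trichotomy (q j) 0 with hj | hj | hj
    · simp only [Int.sign_eq_neg_one_of_neg hj, Pi.zero_apply]
      omega
    · simp [hj]
    · simp only [Int.sign_eq_one_of_pos hj, Pi.zero_apply]
      omega
  · obtain ⟨⟨j, i⟩, hji⟩ := hC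
    have hq : q j ≠ 0 := fun h ↦ by simpa [h] using i.2
    have hne : (fiber j).Nonempty := ⟨i, by simpa [fiber] using hji⟩
    exact Function.ne_iff.2 ⟨j, by simp [hq, hne.ne_empty]⟩
  · rw [hCfiber, Finset.sum_sigma]
    simp [mul_smul]


theorem sum_sigma_sign_smul {ι M : Type*} [Fintype ι] [AddCommGroup M] (q : ι → ℤ)
    (a : ι → M) : ∑ p : Σ j, Fin (q j).natAbs, (q p.1).sign • a p.1 = ∑ j, q j • a j := by
  rw [Fintype.sum_sigma]
  refine Finset.sum_congr rfl fun j _ ↦ ?_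
  dsimp only
  rw [Finset.sum_const, Finset.card_univ, Fintype.card_fin, ← natCast_zsmul, smul_smul, mul_comm,
    Int.sign_mul_natAbs]

theorem mulVec_eq_sum_smul_col {ι ρ R : Type*} [Fintype ι] [CommSemiring R] (A : Matrix ρ ι R)
    (v : ι → R) : A *ᵥ v = ∑ j, v j • A.col j := by
  rw [mulVec_eq_sum]
  exact Finset.sum_congr rfl fun j _ ↦ op_smul_eq_smul _ _

variable {ι ρ : Type*} [Fintype ι] {A : Matrix ρ ι ℤ} {Δ : ℝ} {f : ι → ℝ}

theorem map_intCast_mulVec (A : Matrix ρ ι ℤ) (z : ι → ℤ) :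
    A.map Int.cast *ᵥ (Int.cast ∘ z : ι → ℝ) = Int.cast ∘ (A *ᵥ z) :=
  funext fun i ↦ ((Int.castRingHom ℝ).map_mulVec A z i).symm

theorem map_intCast_mulVec_le_iff {z : ι → ℤ} {b : ρ → ℤ} :
    A.map Int.cast *ᵥ (Int.cast ∘ z : ι → ℝ) ≤ Int.cast ∘ b ↔ A *ᵥ z ≤ b := by
  simp only [map_intCast_mulVec, Pi.le_def, Function.comp_apply, Int.cast_le]

variable [Fintype ρ]

theorem exists_mem_uIcc_mulVec_eq_zero (hΔ : 0 ≤ Δ) (hA : ∀ i j, |(A i j : ℝ)| ≤ Δ)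
    {q : ι → ℤ} (hf : ∀ j, |f j| ≤ 1) (hker : A.map Int.cast *ᵥ (Int.cast ∘ q + f) = 0)
    (hlong : (({j | f j ≠ 0} : Finset ι).card + 1) *
        (2 * Fintype.card ρ * Δ + 1) ^ Fintype.card ρ <
      (({j | f j ≠ 0} : Finset ι).card + ∑ j, (q j).natAbs + 1 : ℝ)) :
    ∃ u ∈ Set.uIcc 0 q, u ≠ 0 ∧ A *ᵥ u = 0 := by
  set F : Finset ι := {j | f j ≠ 0}
  have hcol : ∀ j, ‖A.col j‖ ≤ Δ := fun j ↦ (pi_norm_le_iff_of_nonneg hΔ).2 fun i ↦ hA i j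
  have hcopies : ∀ p : Σ j, Fin (q j).natAbs, ‖(q p.1).sign • A.col p.1‖ ≤ Δ := by
    rintro ⟨j, -⟩
    rcases lt_trichotomy (q j) 0 with hj | hj | hj
    · simpa [Int.sign_eq_neg_one_of_neg hj] using hcol j
    · simpa [hj] using hΔ
    · simpa [Int.sign_eq_one_of_pos hj] using hcol j
  have hfrac : ∀ j : F, ‖f j • (A.map Int.cast : Matrix ρ ι ℝ).col j‖ ≤ Δ := by
    intro j
    have hcast : ‖(A.map Int.cast : Matrix ρ ι ℝ).col j‖ ≤ Δ :=
      (pi_norm_le_iff_of_nonneg hΔ).2 fun i ↦ hA i j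
    rw [norm_smul]
    exact (mul_le_of_le_one_left (norm_nonneg _) (hf j)).trans hcast
  have hcancel : ∑ j : F, f j • (A.map Int.cast : Matrix ρ ι ℝ).col j +
      ∑ p : Σ j, Fin (q j).natAbs, (Int.cast ∘ ((q p.1).sign • A.col p.1) : ρ → ℝ) = 0 := by
    rw [← hker, mulVec_add, add_comm, map_intCast_mulVec, mulVec_eq_sum_smul_col A,
      ← sum_sigma_sign_smul, mulVec_eq_sum_smul_col]
    congr 1
    · ext i
      simp
    · rw [Finset.sum_coe_sort F fun j ↦ f j • (A.map Int.cast : Matrix ρ ι ℝ).col j]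
      refine Finset.sum_subset F.subset_univ fun j _ hj ↦ ?_
      rw [show f j = 0 by simpa [F] using hj, zero_smul]
  obtain ⟨C, hC, hCsum⟩ := exists_nonempty_sum_eq_zero hΔ hfrac hcopies hcancel
    (by simpa using hlong)
  obtain ⟨u, hu, hne, hsum⟩ := exists_mem_uIcc_sum_sign_smul_eq hC A.col
  refine ⟨u, hu, hne, ?_⟩
  rw [mulVec_eq_sum_smul_col, ← hsum, hCsum]

theorem exists_mem_uIcc_mulVec_eq_sum_natAbs_le (hΔ : 0 ≤ Δ) (hA : ∀ i j, |(A i j : ℝ)| ≤ Δ)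
    (hf : ∀ j, |f j| ≤ 1) (q : ι → ℤ) (hker : A.map Int.cast *ᵥ (Int.cast ∘ q + f) = 0) :
    ∃ q' ∈ Set.uIcc 0 q, A *ᵥ q' = A *ᵥ q ∧
      (({j | f j ≠ 0} : Finset ι).card + ∑ j, (q' j).natAbs + 1 : ℝ) ≤
        (({j | f j ≠ 0} : Finset ι).card + 1) *
          (2 * Fintype.card ρ * Δ + 1) ^ Fintype.card ρ := by
  induction hN : ∑ j, (q j).natAbs using Nat.strong_induction_on generalizing q with
  | _ N ih =>
  subst hN
  by_contra! hlong
  obtain ⟨u, hu, hne, hAu⟩ := exists_mem_uIcc_mulVec_eq_zero hΔ hA hf hker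
    (hlong q Set.right_mem_uIcc rfl)
  have hker' : A.map Int.cast *ᵥ (Int.cast ∘ (q - u) + f) = 0 := by
    have hu0 : A.map Int.cast *ᵥ (Int.cast ∘ u : ι → ℝ) = 0 := by
      ext i
      simp [map_intCast_mulVec, hAu]
    have hsplit : (Int.cast ∘ (q - u) + f : ι → ℝ) = Int.cast ∘ q + f - Int.cast ∘ u := by
      ext j
      simp [sub_add_eq_add_sub]
    rw [hsplit, mulVec_sub, hker, hu0, sub_zero]
  obtain ⟨q', hq', hAq', hshort⟩ := ih _ (sum_natAbs_sub_lt hu hne) (q - u) hker' rfl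
  exact (hlong q' (Set.uIcc_subset_uIcc_left (sub_mem_uIcc_zero hu) hq')
    (by rw [hAq', mulVec_sub, hAu, sub_zero])).not_ge hshort

end ConformalReduction

section IntegralityGap

variable {ι ρ : Type*} [Fintype ι]

theorem dotProduct_le_norm_mul_sum_abs (c v : ι → ℝ) : c ⬝ᵥ v ≤ ‖c‖ * ∑ j, |v j| := by
  rw [Finset.mul_sum]
  refine Finset.sum_le_sum fun j _ ↦ (le_abs_self _).trans ?_
  rw [abs_mul]
  gcongr
  exact norm_le_pi_norm c j

variable [Fintype ρ]

theorem exists_mem_uIcc_floor_sum_abs_sub_le {A : Matrix ρ ι ℤ} {Δ : ℝ} (hΔ : 0 ≤ Δ)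
    (hA : ∀ i j, |(A i j : ℝ)| ≤ Δ) {y : ι → ℝ} {z : ι → ℤ}
    (hyz : A.map Int.cast *ᵥ y = Int.cast ∘ (A *ᵥ z)) :
    ∃ z' ∈ Set.uIcc z (Int.floor ∘ y), A *ᵥ z' = A *ᵥ z ∧
      ∑ j, |y j - z' j| ≤ (({j | Int.fract (y j) ≠ 0} : Finset ι).card + 1) *
        (2 * Fintype.card ρ * Δ + 1) ^ Fintype.card ρ := by
  have hfract : ∀ j, |Int.fract (y j)| ≤ 1 := fun j ↦ by
    simpa [abs_of_nonneg] using (Int.fract_lt_one (y j)).le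
  have hsplit : (Int.cast ∘ (Int.floor ∘ y - z) + Int.fract ∘ y : ι → ℝ) = y - Int.cast ∘ z := by
    ext j
    simp [← Int.self_sub_floor]
  obtain ⟨q, hq, hAq, hshort⟩ := exists_mem_uIcc_mulVec_eq_sum_natAbs_le hΔ hA hfract
    (Int.floor ∘ y - z) (by
      rw [← Function.comp_def Int.fract, hsplit, mulVec_sub, hyz, map_intCast_mulVec, sub_self])
  have hmem : ∀ j, q j ∈ Set.uIcc 0 (⌊y j⌋ - z j) := fun j ↦ by
    rw [← Set.pi_univ_uIcc] at hq
    exact hq j trivial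
  refine ⟨Int.floor ∘ y - q, ?_, ?_, ?_⟩
  · rw [← Set.pi_univ_uIcc]
    intro j _
    have := hmem j
    simp only [Set.mem_uIcc, Pi.sub_apply, Function.comp_apply] at this ⊢
    omega
  · simp [mulVec_sub, hAq]
  · have hcoord : ∀ j, |y j - (⌊y j⌋ - q j : ℤ)| ≤ |Int.fract (y j)| + (q j).natAbs := fun j ↦ by
      rw [Int.cast_sub, ← sub_add, Int.self_sub_floor, Nat.cast_natAbs, Int.cast_abs]
      exact abs_add_le _ _
    have hsum : ∑ j, |Int.fract (y j)| ≤ ({j | Int.fract (y j) ≠ 0} : Finset ι).card := by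
      rw [Finset.card_filter, Nat.cast_sum]
      refine Finset.sum_le_sum fun j _ ↦ ?_
      by_cases hj : Int.fract (y j) = 0
      · simp [hj]
      · simpa [hj] using hfract j
    have htotal := Finset.sum_le_sum fun j (_ : j ∈ Finset.univ) ↦ hcoord j
    rw [Finset.sum_add_distrib, ← Nat.cast_sum] at htotal
    exact htotal.trans (by linarith)

theorem integrality_gap_of_mulVec_eq {A : Matrix ρ ι ℤ} {Δ : ℝ} (hΔ : 0 ≤ Δ)
    (hA : ∀ i j, |(A i j : ℝ)| ≤ Δ) (c : ι → ℝ) (S : Set ι) {x : ι → ℝ} {z : ι → ℤ}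
    (hx : ∀ j ∈ S, 0 ≤ x j) (hz : ∀ j ∈ S, 0 ≤ z j)
    (hxz : A.map Int.cast *ᵥ x = Int.cast ∘ (A *ᵥ z))
    (hopt : ∀ z', A *ᵥ z' = A *ᵥ z → (∀ j ∈ S, 0 ≤ z' j) →
      c ⬝ᵥ (Int.cast ∘ z') ≤ c ⬝ᵥ (Int.cast ∘ z)) :
    c ⬝ᵥ x ≤ c ⬝ᵥ (Int.cast ∘ z) +
      ‖c‖ * ((Fintype.card ρ + 1) * (2 * Fintype.card ρ * Δ + 1) ^ Fintype.card ρ) := by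
  obtain ⟨y, hround, hAy, hcy, hcard⟩ :=
    exists_rounding_card_fract_le_finrank (A.map Int.cast : Matrix ρ ι ℝ).mulVecLin c x
  rw [mulVecLin_apply, mulVecLin_apply, hxz] at hAy
  rw [Module.finrank_fintype_fun_eq_card] at hcard
  obtain ⟨z', hz', hAz', hclose⟩ := exists_mem_uIcc_floor_sum_abs_sub_le hΔ hA hAy
  have hnonneg : ∀ j ∈ S, 0 ≤ z' j := fun j hj ↦ by
    have hfloor : 0 ≤ ⌊y j⌋ := (Int.floor_nonneg.2 (hx j hj)).trans (Int.le_floor.2 (hround j).1)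
    exact (le_inf (hz j hj) hfloor).trans (hz'.1 j)
  calc c ⬝ᵥ x ≤ c ⬝ᵥ (Int.cast ∘ z') + c ⬝ᵥ (y - Int.cast ∘ z') := by
        rwa [← dotProduct_add, add_sub_cancel]
    _ ≤ c ⬝ᵥ (Int.cast ∘ z) + ‖c‖ * ∑ j, |y j - z' j| :=
        add_le_add (hopt z' hAz' hnonneg) (dotProduct_le_norm_mul_sum_abs c _)
    _ ≤ _ := by
        gcongr
        exact hclose.trans (by gcongr)

theorem sumElim_zero_dotProduct (c : ι → ℝ) (v : ι ⊕ ρ → ℝ) :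
    Sum.elim c 0 ⬝ᵥ v = c ⬝ᵥ (v ∘ Sum.inl) := by
  simp [dotProduct]

theorem norm_sumElim_zero (c : ι → ℝ) : ‖(Sum.elim c 0 : ι ⊕ ρ → ℝ)‖ = ‖c‖ := by
  refine le_antisymm ((pi_norm_le_iff_of_nonneg (norm_nonneg c)).2 ?_)
    ((pi_norm_le_iff_of_nonneg (norm_nonneg _)).2 fun j ↦
      norm_le_pi_norm (Sum.elim c 0 : ι ⊕ ρ → ℝ) (Sum.inl j))
  rintro (j | i)
  · exact norm_le_pi_norm c j
  · simp

theorem integrality_gap_of_mulVec_le_of_one_le {D : Matrix ρ ι ℤ} {δ : ℝ} (hδ : 1 ≤ δ)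
    (hD : ∀ i j, |(D i j : ℝ)| ≤ δ) (c : ι → ℝ) {b : ρ → ℤ} {x : ι → ℝ} {z : ι → ℤ}
    (hx : D.map Int.cast *ᵥ x ≤ Int.cast ∘ b) (hz : D *ᵥ z ≤ b)
    (hopt : ∀ z', D *ᵥ z' ≤ b → c ⬝ᵥ (Int.cast ∘ z') ≤ c ⬝ᵥ (Int.cast ∘ z)) :
    c ⬝ᵥ x ≤ c ⬝ᵥ (Int.cast ∘ z) +
      ‖c‖ * ((Fintype.card ρ + 1) * (2 * Fintype.card ρ * δ + 1) ^ Fintype.card ρ) := by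
  classical
  have hδ0 : 0 ≤ δ := zero_le_one.trans hδ
  let A : Matrix ρ (ι ⊕ ρ) ℤ := fromCols D 1
  have hA : ∀ i k, |(A i k : ℝ)| ≤ δ := by
    rintro i (j | k)
    · exact hD i j
    · rcases eq_or_ne i k with rfl | hik
      · simpa [A] using hδ
      · simpa [A, one_apply, hik] using hδ0
  have hAz : ∀ z' : ι ⊕ ρ → ℤ, A *ᵥ z' = D *ᵥ (z' ∘ Sum.inl) + z' ∘ Sum.inr := fun z' ↦ by
    rw [fromCols_mulVec, one_mulVec]
  have hAx : A.map Int.cast *ᵥ Sum.elim x (Int.cast ∘ b - D.map Int.cast *ᵥ x) =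
      (Int.cast ∘ b : ρ → ℝ) := by
    rw [fromCols_map, fromCols_mulVec_sumElim, Matrix.map_one _ Int.cast_zero Int.cast_one,
      one_mulVec, add_sub_cancel]
  have hfeas : ∀ z' : ι ⊕ ρ → ℤ, A *ᵥ z' = b → (∀ k ∈ Set.range Sum.inr, 0 ≤ z' k) →
      D *ᵥ (z' ∘ Sum.inl) ≤ b := by
    intro z' hz' hpos
    rw [← hz', hAz]
    exact le_add_of_nonneg_right fun i ↦ hpos _ ⟨i, rfl⟩
  have hzb : A *ᵥ Sum.elim z (b - D *ᵥ z) = b := by simp [hAz]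
  have hgap := integrality_gap_of_mulVec_eq hδ0 hA (Sum.elim c 0) (Set.range Sum.inr)
    (x := Sum.elim x (Int.cast ∘ b - D.map Int.cast *ᵥ x)) (z := Sum.elim z (b - D *ᵥ z))
    (Set.forall_mem_range.2 fun i ↦ by simpa using hx i)
    (Set.forall_mem_range.2 fun i ↦ by simpa using hz i) (by rw [hAx, hzb])
    fun z' hz' hpos ↦ by
      rw [sumElim_zero_dotProduct, sumElim_zero_dotProduct]
      exact hopt _ (hfeas z' (hz'.trans hzb) hpos)
  rw [sumElim_zero_dotProduct, sumElim_zero_dotProduct, norm_sumElim_zero] at hgap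
  exact hgap

theorem integrality_gap_of_mulVec_le {D : Matrix ρ ι ℤ} {δ : ℝ} (hδ : 0 ≤ δ)
    (hD : ∀ i j, |(D i j : ℝ)| ≤ δ) (c : ι → ℝ) {b : ρ → ℤ} {x : ι → ℝ} {z : ι → ℤ}
    (hx : D.map Int.cast *ᵥ x ≤ Int.cast ∘ b) (hz : D *ᵥ z ≤ b)
    (hopt : ∀ z', D *ᵥ z' ≤ b → c ⬝ᵥ (Int.cast ∘ z') ≤ c ⬝ᵥ (Int.cast ∘ z)) :
    c ⬝ᵥ x ≤ c ⬝ᵥ (Int.cast ∘ z) +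
      ‖c‖ * ((Fintype.card ρ + 1) * (2 * Fintype.card ρ * δ + 1) ^ Fintype.card ρ) := by
  -- The slack columns have entries `1`, so they respect the bound `δ` only if `1 ≤ δ`.
  rcases lt_or_ge δ 1 with hδ1 | hδ1
  · have hD0 : D = 0 := by
      ext i j
      exact Int.abs_lt_one_iff.1 (by exact_mod_cast (hD i j).trans_lt hδ1)
    subst hD0
    exact integrality_gap_of_mulVec_eq hδ hD c ∅ (by simp) (by simp) (by ext; simp)
      fun z' hz' _ ↦ hopt z' (hz'.trans_le hz)
  · exact integrality_gap_of_mulVec_le_of_one_le hδ1 hD c hx hz hopt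

theorem norm_eq_iSup_abs (c : ι → ℝ) : ‖c‖ = ⨆ j, |c j| :=
  le_antisymm ((pi_norm_le_iff_of_nonneg (Real.iSup_nonneg fun _ ↦ abs_nonneg _)).2 fun j ↦
      le_ciSup (f := fun j ↦ |c j|) (Set.finite_range _).bddAbove j)
    (Real.iSup_le (norm_le_pi_norm c) (norm_nonneg c))

end IntegralityGap

/-- Approximation guarantee for the Relaxed Foresight Algorithm with an
integer-linear follower (many variables, few constraints): the leader's value
obtained by the algorithm exceeds the value of any bilevel-feasible
leader–follower pair by at most `2 * ‖d‖_∞ * m * (2 * m * δ(D) + 1) ^ m`,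
where `δ(D)` bounds the absolute values of the entries of the integral matrix
`D` and `m` is its number of rows. -/
theorem relaxed_foresight_linear_follower_entry_bound_guarantee
    (nx ny m : ℕ) (hnx : 0 < nx) (hny : 0 < ny) (hm : 0 < m)
    -- leader's decisions
    (X : Type) (hX : Nonempty X)
    (h : X → ℝ)
    -- follower's (and leader's, negated) linear objective
    (d : Fin ny → ℝ)
    -- follower's constraint data: integral matrix `D`, integer-valued `g`
    (D : Matrix (Fin m) (Fin ny) ℤ)
    (g : X → Fin m → ℤ)
    -- follower's relaxed feasible set `P x = {y | g x + D y ≤ 0}`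
    (P : X → Set (Fin ny → ℝ))
    (hP : ∀ x, P x = {y : Fin ny → ℝ |
      ∀ i, (g x i : ℝ) + (D.map (Int.cast : ℤ → ℝ)).mulVec y i ≤ 0})
    -- integrality predicate
    (IsInt : (Fin ny → ℝ) → Prop)
    (hIsInt : ∀ y, IsInt y ↔ ∀ i, ∃ w : ℤ, y i = (w : ℝ))
    -- for every `x`, the integer feasible set is nonempty and both the relaxed
    -- and the integer linear program attain finite maxima
    (hfeas : ∀ x : X, ∃ y, IsInt y ∧ y ∈ P x)
    (hmaxR : ∀ x : X, ∃ yh ∈ P x, ∀ y ∈ P x, d ⬝ᵥ y ≤ d ⬝ᵥ yh)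
    (hmaxZ : ∀ x : X, ∃ yt, IsInt yt ∧ yt ∈ P x ∧
      ∀ y, IsInt y → y ∈ P x → d ⬝ᵥ y ≤ d ⬝ᵥ yt)
    -- `δ` bounds the absolute values of the entries of `D`
    (δ : ℝ)
    (hδ : ∀ i j, |((D i j : ℤ) : ℝ)| ≤ δ)
    -- `x*, ŷ*` solve the follower-relaxed bilevel problem
    (xstar : X) (yhstar : Fin ny → ℝ)
    (hyhstar : yhstar ∈ P xstar ∧ ∀ y ∈ P xstar, d ⬝ᵥ y ≤ d ⬝ᵥ yhstar)
    (hleaderopt : ∀ x : X, ∀ yh ∈ P x, (∀ y ∈ P x, d ⬝ᵥ y ≤ d ⬝ᵥ yh) →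
      h xstar + d ⬝ᵥ yhstar ≤ h x + d ⬝ᵥ yh)
    -- `y*` maximizes `dᵀy` over `P(x*) ∩ ℤ^{n_y}`
    (ystar : Fin ny → ℝ)
    (hystar : IsInt ystar ∧ ystar ∈ P xstar ∧
      ∀ y, IsInt y → y ∈ P xstar → d ⬝ᵥ y ≤ d ⬝ᵥ ystar) :
    ∀ x : X, ∀ y : Fin ny → ℝ, IsInt y → y ∈ P x →
      (∀ z, IsInt z → z ∈ P x → d ⬝ᵥ z ≤ d ⬝ᵥ y) →
      h xstar + d ⬝ᵥ ystar ≤ h x + d ⬝ᵥ y +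
        2 * (⨆ i, |d i|) * m * (2 * m * δ + 1) ^ m := by
  intro x y hyZ hy hymax
  obtain ⟨yhat, hyhat, hyhatmax⟩ := hmaxR x
  choose z hz using (hIsInt y).1 hyZ
  obtain rfl : y = Int.cast ∘ z := funext hz
  have hmem : ∀ y, y ∈ P x ↔ D.map Int.cast *ᵥ y ≤ Int.cast ∘ (-g x) := fun y ↦ by
    simp [hP, Pi.le_def, ← le_neg_iff_add_nonpos_left]
  have hmemZ : ∀ z : Fin ny → ℤ, Int.cast ∘ z ∈ P x ↔ D *ᵥ z ≤ -g x := fun z ↦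
    (hmem _).trans map_intCast_mulVec_le_iff
  have hδ0 : 0 ≤ δ := (abs_nonneg _).trans (hδ ⟨0, hm⟩ ⟨0, hny⟩)
  have hgap : d ⬝ᵥ yhat ≤ d ⬝ᵥ (Int.cast ∘ z) + ‖d‖ * ((m + 1) * (2 * m * δ + 1) ^ m) := by
    simpa using integrality_gap_of_mulVec_le hδ0 hδ d ((hmem yhat).1 hyhat) ((hmemZ z).1 hy)
      fun z' hz' ↦ hymax _ ((hIsInt _).2 fun i ↦ ⟨z' i, rfl⟩) ((hmemZ z').2 hz')
  have hm1 : (m : ℝ) + 1 ≤ 2 * m := by exact_mod_cast (by omega : m + 1 ≤ 2 * m)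
  calc h xstar + d ⬝ᵥ ystar ≤ h xstar + d ⬝ᵥ yhstar := by grw [hyhstar.2 _ hystar.2.1]
    _ ≤ h x + d ⬝ᵥ yhat := hleaderopt x yhat hyhat hyhatmax
    _ ≤ h x + (d ⬝ᵥ (Int.cast ∘ z) + ‖d‖ * ((2 * m) * (2 * m * δ + 1) ^ m)) := by
        grw [hgap, hm1]
    _ = h x + d ⬝ᵥ (Int.cast ∘ z) + 2 * (⨆ i, |d i|) * m * (2 * m * δ + 1) ^ m := by
        rw [norm_eq_iSup_abs]
        ring
end

section
/- Intermediate bound in the integer-linear follower analysis: the optimal value of the follower-relaxed problem is at most the bilevel optimum plus ‖d‖₁·n_y·Δ(D); precisely, for every x ∈ X and every maximizer y of dᵀy over P(x) ∩ ℤ^{n_y}, h(x*) + dᵀŷ* ≤ h(x) + dᵀy + ‖d‖₁·n_y·Δ(D). -/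
open Matrix BigOperators

/-!
It suffices to bound the integrality gap of the follower's problem at a fixed leader decision, by
the proximity argument of Cook, Gerards, Schrijver and Tardos. Let `ŷ` be any point of the
relaxation and `y` an optimal integer point, and append the identity to the rows of `D`. Subtracting
conformal elementary vectors as long as possible writes `ŷ - y` as a sum of at most `n_y` elementary
vectors, each conformal to `ŷ - y` (Rockafellar). By Cramer's rule an elementary vector is a
positive multiple `c • w` of an integer vector `w` whose entries are minors of the extended matrix,
hence bounded by `Δ`. Replacing every `c` by `⌊c⌋` gives an integer vector `z` with
`‖ŷ - y - z‖ ≤ n_y * Δ` in the sup norm, and conformality makes `y + z` feasible, since every entry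
of `D z` lies between `0` and that of `D (ŷ - y)`. Optimality of `y` now bounds `dᵀŷ - dᵀy` by
`dᵀ(ŷ - y - z) ≤ ‖d‖₁ * n_y * Δ`.

The bound on the minors of the extended matrix needs `1 ≤ Δ`, which can fail only if `D = 0`; in
that case all integer points are feasible, so `d = 0`.
-/

open Module

section Conformal

variable {K V ι : Type*} [Field K] [AddCommGroup V] [Module K V] {L : V →ₗ[K] ι → K} {u v w : V}

/-- The subspace of vectors vanishing in every coordinate in which `v` vanishes. -/
def tightSpace (L : V →ₗ[K] ι → K) (v : V) : Submodule K V :=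
  (Submodule.pi {i | L v i = 0} fun _ => ⊥).comap L

theorem mem_tightSpace : w ∈ tightSpace L v ↔ ∀ i, L v i = 0 → L w i = 0 := by
  simp [tightSpace, Submodule.mem_pi]

theorem self_mem_tightSpace (L : V →ₗ[K] ι → K) (v : V) : v ∈ tightSpace L v :=
  mem_tightSpace.2 fun _ => id

/-- Elementary vectors in the sense of Rockafellar: nonzero vectors of minimal support with respect
to the coordinates given by `L`, that is, vectors spanning their tight space. -/
def IsElementaryVector (L : V →ₗ[K] ι → K) (u : V) : Prop :=
  u ≠ 0 ∧ tightSpace L u ≤ K ∙ u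

theorem IsElementaryVector.smul (hu : IsElementaryVector L u) {t : K} (ht : t ≠ 0) :
    IsElementaryVector L (t • u) := by
  refine ⟨smul_ne_zero ht hu.1, ?_⟩
  rw [Submodule.span_singleton_smul_eq ht.isUnit]
  refine le_trans (fun w hw => ?_) hu.2
  exact mem_tightSpace.2 fun i hi => mem_tightSpace.1 hw i (by simp [hi])

variable [LinearOrder K]

/-- The vector `u` is conformal to `v` with respect to the coordinates given by `L`: a coordinate of
`u` vanishes or has the sign of the same coordinate of `v`, and vanishes where that of `v` does.
Conformality is encoded by the nonnegative ratios of the coordinates. -/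
def SignConformal (L : V →ₗ[K] ι → K) (u v : V) : Prop :=
  ∃ c : ι → K, 0 ≤ c ∧ L u = c * L v

theorem SignConformal.tightSpace_le (huv : SignConformal L u v) :
    tightSpace L u ≤ tightSpace L v := by
  obtain ⟨c, -, hcu⟩ := huv
  intro w hw
  exact mem_tightSpace.2 fun i hi => mem_tightSpace.1 hw i (by simp [hcu, hi])

theorem SignConformal.mem_tightSpace (huv : SignConformal L u v) : u ∈ tightSpace L v :=
  huv.tightSpace_le (self_mem_tightSpace L u)

variable [IsStrictOrderedRing K]

theorem SignConformal.refl (L : V →ₗ[K] ι → K) (v : V) : SignConformal L v v :=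
  ⟨1, zero_le_one, (one_mul _).symm⟩

theorem SignConformal.trans (huv : SignConformal L u v) (hvw : SignConformal L v w) :
    SignConformal L u w := by
  obtain ⟨a, ha, hau⟩ := huv
  obtain ⟨b, hb, hbv⟩ := hvw
  exact ⟨a * b, mul_nonneg ha hb, by rw [hau, hbv, mul_assoc]⟩

theorem SignConformal.smul (huv : SignConformal L u v) {t : K} (ht : 0 ≤ t) :
    SignConformal L (t • u) v := by
  obtain ⟨c, hc, hcu⟩ := huv
  exact ⟨t • c, smul_nonneg ht hc, by rw [map_smul, hcu, smul_mul_assoc]⟩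

theorem sum_smul_apply_mem_uIcc_of_signConformal {κ : Type*} [Fintype κ] {u : κ → V}
    (hu : ∀ j, SignConformal L (u j) (∑ j, u j)) {θ : κ → K} (hθ : ∀ j, θ j ∈ Set.Icc 0 1) (i : ι) :
    L (∑ j, θ j • u j) i ∈ Set.uIcc 0 (L (∑ j, u j) i) := by
  choose c hc0 hc using hu
  set x := L (∑ j, u j) with hx
  have hsum : x i = (∑ j, c j i) * x i := by
    conv_lhs => rw [hx, map_sum, Finset.sum_apply]
    simp only [hc, Pi.mul_apply, Finset.sum_mul]
  have hscaled : L (∑ j, θ j • u j) i = (∑ j, θ j * c j i) * x i := by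
    simp only [map_sum, map_smul, hc, Finset.sum_apply, Pi.smul_apply, Pi.mul_apply, smul_eq_mul,
      Finset.sum_mul, mul_assoc]
  have hnonneg : 0 ≤ ∑ j, θ j * c j i :=
    Finset.sum_nonneg fun j _ => mul_nonneg (hθ j).1 (hc0 j i)
  have hle : ∑ j, θ j * c j i ≤ ∑ j, c j i :=
    Finset.sum_le_sum fun j _ => mul_le_of_le_one_left (hc0 j i) (hθ j).2
  rw [hscaled, Set.mem_uIcc]
  rcases le_total 0 (x i) with h | h
  · exact .inl ⟨mul_nonneg hnonneg h, (mul_le_mul_of_nonneg_right hle h).trans_eq hsum.symm⟩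
  · exact .inr ⟨hsum.trans_le (mul_le_mul_of_nonpos_right hle h),
      mul_nonpos_of_nonneg_of_nonpos hnonneg h⟩

variable [Finite ι] [FiniteDimensional K V]

/-- One walks from `v` in the direction `-w` until a further coordinate vanishes, which first
happens where the ratio `L w i / L v i` is largest. -/
theorem exists_signConformal_sub_smul_finrank_tightSpace_lt (hw : w ∈ tightSpace L v)
    (hpos : ∃ i, 0 < L w i / L v i) :
    ∃ t : K, 0 < t ∧ SignConformal L (v - t • w) v ∧
      finrank K (tightSpace L (v - t • w)) < finrank K (tightSpace L v) := by
  obtain ⟨i₀, hi₀⟩ := hpos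
  have : Nonempty ι := ⟨i₀⟩
  obtain ⟨i, hmax⟩ := Finite.exists_max fun i => L w i / L v i
  set ρ : ι → K := fun i => L w i / L v i
  have hρi : 0 < ρ i := hi₀.trans_le (hmax i₀)
  have hvi : L v i ≠ 0 := fun h => by simp [ρ, h] at hρi
  -- also where `L v j = 0`: there `L w j = 0` and `ρ j = 0`
  have hLw : L w = ρ * L v :=
    funext fun j => (div_mul_cancel_of_imp (mem_tightSpace.1 hw j)).symm
  have hL : L (v - (ρ i)⁻¹ • w) = (1 - (ρ i)⁻¹ • ρ) * L v := by
    rw [map_sub, map_smul, hLw, sub_mul, one_mul, smul_mul_assoc]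
  have hconf : SignConformal L (v - (ρ i)⁻¹ • w) v := by
    refine ⟨_, fun j => sub_nonneg.2 ?_, hL⟩
    exact (inv_mul_le_one₀ hρi).2 (hmax j)
  refine ⟨(ρ i)⁻¹, inv_pos.2 hρi, hconf, Submodule.finrank_lt_finrank_of_lt ?_⟩
  refine hconf.tightSpace_le.lt_of_not_ge fun hle => hvi ?_
  exact mem_tightSpace.1 (hle (self_mem_tightSpace L v)) i (by simp [hL, hρi.ne'])

theorem exists_isElementaryVector_signConformal (hL : Function.Injective L) (hv : v ≠ 0) :
    ∃ u, IsElementaryVector L u ∧ SignConformal L u v := by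
  induction hk : finrank K (tightSpace L v) using Nat.strong_induction_on generalizing v with
  | _ k ih =>
  by_cases helem : IsElementaryVector L v
  · exact ⟨v, helem, .refl L v⟩
  obtain ⟨w, hw, hwv⟩ : ∃ w ∈ tightSpace L v, w ∉ K ∙ v :=
    SetLike.not_le_iff_exists.1 fun hle => helem ⟨hv, hle⟩
  obtain ⟨i, hwi⟩ : ∃ i, L w i ≠ 0 := by
    refine Function.ne_iff.1 ((map_ne_zero_iff L hL).2 ?_)
    rintro rfl
    exact hwv (zero_mem _)
  have hvi : L v i ≠ 0 := fun h => hwi (mem_tightSpace.1 hw i h)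
  obtain ⟨w', hw', hwv', hpos⟩ :
      ∃ w' ∈ tightSpace L v, w' ∉ K ∙ v ∧ 0 < L w' i / L v i := by
    rcases (div_ne_zero hwi hvi).lt_or_gt with h | h
    · exact ⟨-w, neg_mem hw, by rwa [neg_mem_iff], by simpa [neg_div] using h⟩
    · exact ⟨w, hw, hwv, h⟩
  obtain ⟨t, ht, hconf, hlt⟩ := exists_signConformal_sub_smul_finrank_tightSpace_lt hw' ⟨i, hpos⟩
  have hne : v - t • w' ≠ 0 := by
    intro h
    refine hwv' ((Submodule.smul_mem_iff _ ht.ne').1 ?_)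
    rw [← sub_eq_zero.1 h]
    exact Submodule.mem_span_singleton_self v
  obtain ⟨u, hu, huv⟩ := ih _ (hk ▸ hlt) hne rfl
  exact ⟨u, hu, huv.trans hconf⟩

theorem exists_sum_isElementaryVector_signConformal (hL : Function.Injective L) (v : V) :
    ∃ k ≤ finrank K (tightSpace L v), ∃ u : Fin k → V,
      (∀ j, IsElementaryVector L (u j)) ∧ (∀ j, SignConformal L (u j) v) ∧ ∑ j, u j = v := by
  induction hk : finrank K (tightSpace L v) using Nat.strong_induction_on generalizing v with
  | _ k ih =>
  rcases eq_or_ne v 0 with rfl | hv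
  · exact ⟨0, zero_le, 0, nofun, nofun, by simp⟩
  obtain ⟨u, hu, huv⟩ := exists_isElementaryVector_signConformal hL hv
  have hpos : ∃ i, 0 < L u i / L v i := by
    obtain ⟨i, hui⟩ := Function.ne_iff.1 ((map_ne_zero_iff L hL).2 hu.1)
    obtain ⟨c, hc, hcu⟩ := huv
    rw [hcu, Pi.mul_apply, Pi.zero_apply, mul_ne_zero_iff] at hui
    refine ⟨i, ?_⟩
    rw [hcu, Pi.mul_apply, mul_div_cancel_right₀ _ hui.2]
    exact (hc i).lt_of_ne' hui.1
  obtain ⟨t, ht, hconf, hlt⟩ :=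
    exists_signConformal_sub_smul_finrank_tightSpace_lt huv.mem_tightSpace hpos
  obtain ⟨l, hl, u', hu', huv', hsum⟩ := ih _ (hk ▸ hlt) (v - t • u) rfl
  refine ⟨l + 1, by omega, Fin.cons (t • u) u', Fin.cases (hu.smul ht.ne') hu',
    Fin.cases (huv.smul ht.le) fun j => (huv' j).trans hconf, ?_⟩
  rw [Fin.sum_cons, hsum, add_sub_cancel]

end Conformal

section Cramer

variable {K ι n : Type*} [Field K] [Finite ι] [Fintype n] [DecidableEq n]

theorem exists_isUnit_submatrix_of_mulVec_injective {A : Matrix ι n K}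
    (hA : Function.Injective A.mulVec) : ∃ r : n → ι, IsUnit (A.submatrix r id) := by
  have hspan : Submodule.span K (Set.range A.row) = ⊤ := by
    refine Submodule.eq_top_of_finrank_eq ?_
    rw [← rank_eq_finrank_span_row, rank]
    exact LinearMap.finrank_range_of_inj (f := A.mulVecLin) hA
  obtain ⟨κ, a, -, hspan', hli⟩ := exists_linearIndependent' K A.row
  let e := (Pi.basisFun K n).indexEquiv (Basis.mk hli (hspan'.trans hspan).ge)
  exact ⟨a ∘ e, linearIndependent_rows_iff_isUnit.1 (hli.comp e e.injective)⟩

theorem eq_smul_col_adjugate_of_mulVec_eq_single {M : Matrix n n K} (hM : IsUnit M) {u : n → K}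
    {k : n} {x : K} (hu : M *ᵥ u = Pi.single k x) :
    u = (M.det⁻¹ * x) • (adjugate M).col k := by
  have hdet : M.det ≠ 0 := ((isUnit_iff_isUnit_det M).1 hM).ne_zero
  have hcramer : M.det • u = x • (adjugate M).col k := by
    calc M.det • u = adjugate M *ᵥ (M *ᵥ u) := by
          rw [mulVec_mulVec, adjugate_mul, smul_mulVec, one_mulVec]
      _ = x • (adjugate M).col k := by rw [hu, mulVec_single, op_smul_eq_smul]
  rw [mul_smul, ← hcramer, inv_smul_smul₀ hdet]

/-- The rows vanishing at `u` together with one that does not contain a nonsingular square matrix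
`M`. As `M u` is supported in a single row, Cramer's rule applies. -/
theorem IsElementaryVector.exists_eq_smul_col_adjugate {A : Matrix ι n K}
    (hA : Function.Injective A.mulVec) {u : n → K} (hu : IsElementaryVector A.mulVecLin u) :
    ∃ (r : n → ι) (k : n) (c : K), u = c • (adjugate (A.submatrix r id)).col k := by
  obtain ⟨i₀, hi₀⟩ : ∃ i, (A *ᵥ u) i ≠ 0 :=
    Function.ne_iff.1 ((map_ne_zero_iff A.mulVecLin hA).2 hu.1)
  let S := {i // (A *ᵥ u) i = 0 ∨ i = i₀}
  have hinj : Function.Injective (A.submatrix (Subtype.val : S → ι) id).mulVecLin := by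
    refine (injective_iff_map_eq_zero _).2 fun w hw => ?_
    have hrow (i : ι) (hi : (A *ᵥ u) i = 0 ∨ i = i₀) : (A *ᵥ w) i = 0 := congrFun hw ⟨i, hi⟩
    obtain ⟨c, rfl⟩ := Submodule.mem_span_singleton.1
      (hu.2 (mem_tightSpace.2 fun i hi => hrow i (.inl hi)))
    have hc : c * (A *ᵥ u) i₀ = 0 := by simpa [mulVec_smul] using hrow i₀ (.inr rfl)
    rw [(mul_eq_zero_iff_right hi₀).1 hc, zero_smul]
  obtain ⟨s, hs⟩ := exists_isUnit_submatrix_of_mulVec_injective hinj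
  let r : n → ι := fun j => s j
  change IsUnit (A.submatrix r id) at hs
  have hr : Function.Injective r :=
    .of_comp (f := A.row) (linearIndependent_rows_iff_isUnit.2 hs).injective
  have hsupp {j : n} (hj : (A *ᵥ u) (r j) ≠ 0) : r j = i₀ := (s j).2.resolve_left hj
  obtain ⟨k, hk⟩ : ∃ k, (A *ᵥ u) (r k) ≠ 0 := by
    refine Function.ne_iff.1 fun h => hu.1 (mulVec_injective_iff_isUnit.2 hs ?_)
    exact h.trans (mulVec_zero _).symm
  have hsingle : A.submatrix r id *ᵥ u = Pi.single k ((A *ᵥ u) (r k)) := by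
    funext j
    rcases eq_or_ne j k with rfl | hjk
    · exact (Pi.single_eq_same (M := fun _ => K) j _).symm
    · rw [Pi.single_eq_of_ne hjk]
      by_contra hj
      exact hjk (hr ((hsupp hj).trans (hsupp hk).symm))
  exact ⟨r, k, _, eq_smul_col_adjugate_of_mulVec_eq_single hs hsingle⟩

end Cramer

section Minors

variable {R m n : Type*} [CommRing R]

theorem mulVec_fromRows_one_injective [Fintype n] [DecidableEq n] (A : Matrix m n R) :
    Function.Injective (fromRows A (1 : Matrix n n R)).mulVec := by
  intro v w hvw
  rw [fromRows_mulVec, fromRows_mulVec, one_mulVec, one_mulVec] at hvw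
  exact (Sum.elim_eq_iff.1 hvw).2

/-- The identity rows turn the unit vectors in the definition of the adjugate into rows. -/
theorem adjugate_submatrix_fromRows_one_apply [Fintype n] [DecidableEq n] (A : Matrix m n R)
    (r : n → m ⊕ n) (a k : n) :
    adjugate ((fromRows A 1).submatrix r id) a k =
      ((fromRows A 1).submatrix (Function.update r k (.inr a)) id).det := by
  rw [adjugate_apply]
  congr 1
  ext i j
  rcases eq_or_ne i k with rfl | hik
  · simp [one_apply, Pi.single_apply, eq_comm]
  · simp [hik]

variable [LinearOrder R] {A : Matrix m n R} {Δ : R}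

/-- All minors of positive order of `A` have absolute value at most `Δ`; for the least such `Δ` this
is the quantity `Δ(A)`. -/
def AbsMinorsLE (A : Matrix m n R) (Δ : R) : Prop :=
  ∀ k : ℕ, 0 < k → ∀ (r : Fin k → m) (c : Fin k → n), Function.Injective r → Function.Injective c →
    |(A.submatrix r c).det| ≤ Δ

theorem AbsMinorsLE.abs_apply_le (hA : AbsMinorsLE A Δ) (i : m) (j : n) : |A i j| ≤ Δ := by
  simpa using hA 1 one_pos (fun _ => i) (fun _ => j) (Function.injective_of_subsingleton _)
    (Function.injective_of_subsingleton _)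

variable [IsStrictOrderedRing R]

theorem AbsMinorsLE.abs_det_submatrix_le [Fintype n] [DecidableEq n] (hA : AbsMinorsLE A Δ)
    (hΔ : 1 ≤ Δ) (r : n → m) : |(A.submatrix r id).det| ≤ Δ := by
  by_cases hr : Function.Injective r
  · rcases isEmpty_or_nonempty n with hn | hn
    · simpa using hΔ
    · let e := (Fintype.equivFin n).symm
      rw [← det_submatrix_equiv_self e, submatrix_submatrix]
      exact hA _ Fintype.card_pos _ _ (hr.comp e.injective) e.injective
  · obtain ⟨i, j, hij, hne⟩ := Function.not_injective_iff.1 hr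
    rw [det_zero_of_row_eq hne (funext fun l => by simp [hij]), abs_zero]
    exact zero_le_one.trans hΔ

theorem abs_det_eq_of_row_eq_single {k : ℕ} {M : Matrix (Fin (k + 1)) (Fin (k + 1)) R}
    {i l : Fin (k + 1)} (hrow : M i = Pi.single l 1) :
    |M.det| = |(M.submatrix i.succAbove l.succAbove).det| := by
  rw [det_succ_row M i, Finset.sum_eq_single l (fun j _ hj => by simp [hrow, hj]) (by simp)]
  simp [hrow, abs_mul]

theorem AbsMinorsLE.fromRows_one [DecidableEq n] (hA : AbsMinorsLE A Δ) (hΔ : 1 ≤ Δ) :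
    AbsMinorsLE (fromRows A (1 : Matrix n n R)) Δ := by
  intro k _ r c hr hc
  induction k with
  | zero => simpa using hΔ
  | succ k ih =>
    by_cases hinr : ∃ i j, r i = .inr j
    · obtain ⟨i, j, hij⟩ := hinr
      have hrow (l : Fin (k + 1)) :
          (fromRows A 1).submatrix r c i l = (1 : Matrix n n R) j (c l) := by
        rw [submatrix_apply, hij, fromRows_apply_inr]
      by_cases hj : ∃ l, c l = j
      · obtain ⟨l, rfl⟩ := hj
        have hsingle : (fromRows A 1).submatrix r c i = Pi.single l 1 := by
          funext l'
          rw [hrow]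
          simp only [one_apply, hc.eq_iff, Pi.single_apply, eq_comm]
        rw [abs_det_eq_of_row_eq_single hsingle, submatrix_submatrix]
        rcases k.eq_zero_or_pos with rfl | hk
        · simpa using hΔ
        · exact ih hk _ _ (hr.comp Fin.succAbove_right_injective)
            (hc.comp Fin.succAbove_right_injective)
      · rw [det_eq_zero_of_row_eq_zero i fun l => ?_, abs_zero]
        · exact zero_le_one.trans hΔ
        · rw [hrow, one_apply_ne fun h => hj ⟨l, h.symm⟩]
    · have hinl (i : Fin (k + 1)) : ∃ a, r i = .inl a := by
        rcases hi : r i with a | j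
        · exact ⟨a, rfl⟩
        · exact (hinr ⟨i, j, hi⟩).elim
      choose r' hr' using hinl
      obtain rfl : r = .inl ∘ r' := funext hr'
      exact hA _ k.succ_pos r' c hr.of_comp hc

end Minors

section Rounding

variable {m n : Type*} [Finite m] [Fintype n] {D : Matrix m n ℤ} {Δ : ℝ}

theorem IsElementaryVector.exists_eq_smul_int [DecidableEq n]
    (hD : AbsMinorsLE (D.map (Int.cast : ℤ → ℝ)) Δ) (hΔ : 1 ≤ Δ) {u : n → ℝ}
    (hu : IsElementaryVector (fromRows (D.map (Int.cast : ℤ → ℝ)) (1 : Matrix n n ℝ)).mulVecLin u) :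
    ∃ (c : ℝ) (w : n → ℤ), 0 < c ∧ u = c • (Int.cast ∘ w) ∧ ‖(Int.cast ∘ w : n → ℝ)‖ ≤ Δ := by
  obtain ⟨r, k, c, hc⟩ := hu.exists_eq_smul_col_adjugate (mulVec_fromRows_one_injective _)
  set w : n → ℤ := (adjugate ((fromRows D 1).submatrix r id)).col k
  have hw : (adjugate ((fromRows (D.map (Int.cast : ℤ → ℝ)) 1).submatrix r id)).col k =
      Int.cast ∘ w := by
    have hmap : (fromRows (D.map (Int.cast : ℤ → ℝ)) 1).submatrix r id =
        (Int.castRingHom ℝ).mapMatrix ((fromRows D 1).submatrix r id) := by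
      ext i j
      rcases hi : r i <;> simp [hi, one_apply]
    rw [hmap, ← RingHom.map_adjugate]
    rfl
  have hnorm : ‖(Int.cast ∘ w : n → ℝ)‖ ≤ Δ := by
    refine (pi_norm_le_iff_of_nonneg (zero_le_one.trans hΔ)).2 fun a => ?_
    rw [← hw, col_apply, adjugate_submatrix_fromRows_one_apply]
    exact (hD.fromRows_one hΔ).abs_det_submatrix_le hΔ _
  rw [hw] at hc
  have hc0 : c ≠ 0 := fun h => hu.1 (by rw [hc, h, zero_smul])
  rcases hc0.lt_or_gt with h | h
  · have hneg : (Int.cast ∘ (-w) : n → ℝ) = -(Int.cast ∘ w) := by ext; simp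
    exact ⟨-c, -w, neg_pos.2 h, by rw [hneg, neg_smul_neg, hc], by rwa [hneg, norm_neg]⟩
  · exact ⟨c, w, h, hc, hnorm⟩

theorem IsElementaryVector.exists_smul_eq_int_norm_sub_le [DecidableEq n]
    (hD : AbsMinorsLE (D.map (Int.cast : ℤ → ℝ)) Δ) (hΔ : 1 ≤ Δ) {u : n → ℝ}
    (hu : IsElementaryVector (fromRows (D.map (Int.cast : ℤ → ℝ)) (1 : Matrix n n ℝ)).mulVecLin u) :
    ∃ θ ∈ Set.Icc (0 : ℝ) 1, ∃ a : n → ℤ, θ • u = Int.cast ∘ a ∧ ‖u - θ • u‖ ≤ Δ := by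
  obtain ⟨c, w, hc, rfl, hw⟩ := hu.exists_eq_smul_int hD hΔ
  have hscale : ((⌊c⌋ : ℝ) / c) • c • (Int.cast ∘ w : n → ℝ) = (⌊c⌋ : ℝ) • (Int.cast ∘ w) := by
    rw [smul_smul, div_mul_cancel₀ _ hc.ne']
  refine ⟨⌊c⌋ / c, ⟨by positivity, (div_le_one₀ hc).2 (Int.floor_le c)⟩, ⌊c⌋ • w, ?_, ?_⟩
  · rw [hscale]
    ext
    simp
  · calc ‖c • (Int.cast ∘ w : n → ℝ) - ((⌊c⌋ : ℝ) / c) • c • (Int.cast ∘ w : n → ℝ)‖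
        = Int.fract c * ‖(Int.cast ∘ w : n → ℝ)‖ := by
          rw [hscale, ← sub_smul, Int.self_sub_floor, norm_smul, Real.norm_of_nonneg
            (Int.fract_nonneg c)]
      _ ≤ ‖(Int.cast ∘ w : n → ℝ)‖ :=
          mul_le_of_le_one_left (norm_nonneg _) (Int.fract_lt_one c).le
      _ ≤ Δ := hw

theorem exists_int_mulVec_mem_uIcc_norm_sub_le (hD : AbsMinorsLE (D.map (Int.cast : ℤ → ℝ)) Δ)
    (hΔ : 1 ≤ Δ) (v : n → ℝ) :
    ∃ z : n → ℤ,
      (∀ i, (D.map (Int.cast : ℤ → ℝ) *ᵥ (Int.cast ∘ z)) i ∈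
        Set.uIcc 0 ((D.map (Int.cast : ℤ → ℝ) *ᵥ v) i)) ∧
      ‖v - Int.cast ∘ z‖ ≤ Fintype.card n * Δ := by
  classical
  obtain ⟨k, hk, u, hu, huv, rfl⟩ := exists_sum_isElementaryVector_signConformal
    (L := (fromRows (D.map (Int.cast : ℤ → ℝ)) (1 : Matrix n n ℝ)).mulVecLin)
    (mulVec_fromRows_one_injective (D.map (Int.cast : ℤ → ℝ))) v
  choose θ hθ a ha hnorm using fun j => (hu j).exists_smul_eq_int_norm_sub_le hD hΔ
  have hz : (Int.cast ∘ ∑ j, a j : n → ℝ) = ∑ j, θ j • u j := by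
    simp only [ha]
    ext
    simp
  refine ⟨∑ j, a j, fun i => ?_, ?_⟩
  · rw [hz]
    exact sum_smul_apply_mem_uIcc_of_signConformal huv hθ (.inl i)
  · have hk' : k ≤ Fintype.card n := hk.trans ((Submodule.finrank_le _).trans_eq (by simp))
    calc ‖∑ j, u j - Int.cast ∘ ∑ j, a j‖ = ‖∑ j, (u j - θ j • u j)‖ := by
          rw [hz, Finset.sum_sub_distrib]
      _ ≤ k * Δ := by simpa using norm_sum_le_of_le Finset.univ fun j _ => hnorm j
      _ ≤ Fintype.card n * Δ := by gcongr

end Rounding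

section IntegralityGap

variable {m n : Type*}

theorem AbsMinorsLE.one_le_of_ne_zero {D : Matrix m n ℤ} {Δ : ℝ}
    (hD : AbsMinorsLE (D.map (Int.cast : ℤ → ℝ)) Δ) (hD0 : D ≠ 0) : 1 ≤ Δ := by
  obtain ⟨i, j, hij⟩ : ∃ i j, D i j ≠ 0 := by
    by_contra! h
    exact hD0 (Matrix.ext h)
  calc (1 : ℝ) ≤ |(D i j : ℝ)| := by exact_mod_cast Int.one_le_abs hij
    _ ≤ Δ := hD.abs_apply_le i j

variable [Fintype n]

theorem dotProduct_le_sum_abs_mul_norm (d w : n → ℝ) : d ⬝ᵥ w ≤ (∑ i, |d i|) * ‖w‖ := by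
  rw [dotProduct, Finset.sum_mul]
  refine Finset.sum_le_sum fun i _ => ?_
  calc d i * w i ≤ |d i| * |w i| := (le_abs_self _).trans_eq (abs_mul _ _)
    _ ≤ |d i| * ‖w‖ := mul_le_mul_of_nonneg_left (norm_le_pi_norm w i) (abs_nonneg _)

theorem eq_zero_of_forall_dotProduct_int_le {d : n → ℝ} {y : n → ℤ}
    (hmax : ∀ z : n → ℤ, d ⬝ᵥ (Int.cast ∘ z) ≤ d ⬝ᵥ (Int.cast ∘ y)) : d = 0 := by
  classical
  have hstep (i : n) (e : ℤ) : d i * e ≤ 0 := by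
    have hcast : (Int.cast ∘ (y + Pi.single i e) : n → ℝ) =
        Int.cast ∘ y + Pi.single i (e : ℝ) := by
      ext j
      rcases eq_or_ne j i with rfl | hj <;> simp [*]
    have h := hmax (y + Pi.single i e)
    rw [hcast, dotProduct_add, dotProduct_single] at h
    exact nonpos_of_add_le_right h
  funext i
  refine le_antisymm ?_ ?_
  · simpa using hstep i 1
  · simpa using hstep i (-1)

/-- The polyhedron `{y | b + A y ≤ 0}`, the follower's relaxed feasible set. -/
def relaxedFeasibleSet (A : Matrix m n ℝ) (b : m → ℝ) : Set (n → ℝ) :=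
  {y | ∀ i, b i + (A *ᵥ y) i ≤ 0}

theorem dotProduct_le_add_of_forall_int_le [Finite m] {D : Matrix m n ℤ} {Δ : ℝ}
    (hD : AbsMinorsLE (D.map (Int.cast : ℤ → ℝ)) Δ) {b : m → ℝ} {d : n → ℝ} {y : n → ℤ}
    (hy : Int.cast ∘ y ∈ relaxedFeasibleSet (D.map Int.cast) b)
    (hmax : ∀ z : n → ℤ, Int.cast ∘ z ∈ relaxedFeasibleSet (D.map Int.cast) b →
      d ⬝ᵥ (Int.cast ∘ z) ≤ d ⬝ᵥ (Int.cast ∘ y))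
    {x : n → ℝ} (hx : x ∈ relaxedFeasibleSet (D.map Int.cast) b) :
    d ⬝ᵥ x ≤ d ⬝ᵥ (Int.cast ∘ y) + (∑ i, |d i|) * Fintype.card n * Δ := by
  rcases eq_or_ne D 0 with rfl | hD0
  · have hd : d = 0 := eq_zero_of_forall_dotProduct_int_le fun z => hmax z fun i => by
      simpa using hy i
    simp [hd]
  obtain ⟨z, hz, hnorm⟩ :=
    exists_int_mulVec_mem_uIcc_norm_sub_le hD (hD.one_le_of_ne_zero hD0) (x - Int.cast ∘ y)
  have hcast : (Int.cast ∘ (y + z) : n → ℝ) = Int.cast ∘ y + Int.cast ∘ z := by ext; simp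
  have hfeas : Int.cast ∘ (y + z) ∈ relaxedFeasibleSet (D.map (Int.cast : ℤ → ℝ)) b := by
    intro i
    have hzi := (hz i).2
    rw [mulVec_sub, Pi.sub_apply, le_sup_iff] at hzi
    rw [hcast, mulVec_add, Pi.add_apply]
    rcases hzi with h | h
    · linarith [hy i]
    · linarith [hx i]
  have hyz : d ⬝ᵥ (Int.cast ∘ y + Int.cast ∘ z) ≤ d ⬝ᵥ (Int.cast ∘ y) := hcast ▸ hmax _ hfeas
  calc d ⬝ᵥ x = d ⬝ᵥ (Int.cast ∘ y + Int.cast ∘ z) + d ⬝ᵥ (x - Int.cast ∘ y - Int.cast ∘ z) := by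
        rw [← dotProduct_add]
        congr 1
        abel
    _ ≤ d ⬝ᵥ (Int.cast ∘ y) + (∑ i, |d i|) * ‖x - Int.cast ∘ y - Int.cast ∘ z‖ :=
        add_le_add hyz (dotProduct_le_sum_abs_mul_norm _ _)
    _ ≤ d ⬝ᵥ (Int.cast ∘ y) + (∑ i, |d i|) * (Fintype.card n * Δ) := by gcongr
    _ = d ⬝ᵥ (Int.cast ∘ y) + (∑ i, |d i|) * Fintype.card n * Δ := by rw [mul_assoc]

end IntegralityGap

/-- The number `v` is a lower bound on the leader's value in the follower-relaxed problem, where the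
follower answers `x` with the supremum `c` of `dᵀy` over the relaxed feasible set. -/
theorem FRV_value_le_bilevel_optimum_add_linear_prox_general {X m n : Type*} [Finite m] [Fintype n]
    (h : X → ℝ) (d : n → ℝ) (D : Matrix m n ℤ) (g : X → m → ℝ) {Δ : ℝ}
    (hΔ : AbsMinorsLE (D.map (Int.cast : ℤ → ℝ)) Δ) {v : ℝ}
    (hv : ∀ x c, IsLUB ((d ⬝ᵥ ·) '' relaxedFeasibleSet (D.map Int.cast) (g x)) c → v ≤ h x + c)
    (x : X) (y : n → ℤ) (hy : Int.cast ∘ y ∈ relaxedFeasibleSet (D.map Int.cast) (g x))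
    (hmax : ∀ z : n → ℤ, Int.cast ∘ z ∈ relaxedFeasibleSet (D.map Int.cast) (g x) →
      d ⬝ᵥ (Int.cast ∘ z) ≤ d ⬝ᵥ (Int.cast ∘ y)) :
    v ≤ h x + d ⬝ᵥ (Int.cast ∘ y) + (∑ i, |d i|) * Fintype.card n * Δ := by
  have hgap : d ⬝ᵥ (Int.cast ∘ y) + (∑ i, |d i|) * Fintype.card n * Δ ∈
      upperBounds ((d ⬝ᵥ ·) '' relaxedFeasibleSet (D.map Int.cast) (g x)) :=
    Set.forall_mem_image.2 fun _ => dotProduct_le_add_of_forall_int_le hΔ hy hmax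
  have hsup := isLUB_csSup ⟨_, Set.mem_image_of_mem _ hy⟩ ⟨_, hgap⟩
  rw [add_assoc]
  exact (hv x _ hsup).trans (add_le_add_right (hsup.2 hgap) _)

/-- Intermediate bound in the integer-linear follower analysis: the optimal
value of the follower-relaxed problem is at most the bilevel optimum plus
`‖d‖₁ * n_y * Δ(D)`; precisely, for every leader decision `x` and every
maximizer `y` of `dᵀy` over `P(x) ∩ ℤ^{n_y}`,
`h x* + dᵀŷ* ≤ h x + dᵀy + ‖d‖₁ * n_y * Δ(D)`. -/
theorem FRV_value_le_bilevel_optimum_add_linear_prox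
    (nx ny m : ℕ) (hnx : 0 < nx) (hny : 0 < ny) (hm : 0 < m)
    -- leader's decisions
    (X : Type) (hX : Nonempty X)
    (h : X → ℝ)
    -- follower's (and leader's, negated) linear objective
    (d : Fin ny → ℝ)
    -- follower's constraint data: integral matrix `D`, integer-valued `g`
    (D : Matrix (Fin m) (Fin ny) ℤ)
    (g : X → Fin m → ℤ)
    -- follower's relaxed feasible set `P x = {y | g x + D y ≤ 0}`
    (P : X → Set (Fin ny → ℝ))
    (hP : ∀ x, P x = {y : Fin ny → ℝ |
      ∀ i, (g x i : ℝ) + (D.map (Int.cast : ℤ → ℝ)).mulVec y i ≤ 0})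
    -- integrality predicate
    (IsInt : (Fin ny → ℝ) → Prop)
    (hIsInt : ∀ y, IsInt y ↔ ∀ i, ∃ w : ℤ, y i = (w : ℝ))
    -- for every `x`, the integer feasible set is nonempty and both the relaxed
    -- and the integer linear program attain finite maxima
    (hfeas : ∀ x : X, ∃ y, IsInt y ∧ y ∈ P x)
    (hmaxR : ∀ x : X, ∃ yh ∈ P x, ∀ y ∈ P x, d ⬝ᵥ y ≤ d ⬝ᵥ yh)
    (hmaxZ : ∀ x : X, ∃ yt, IsInt yt ∧ yt ∈ P x ∧
      ∀ y, IsInt y → y ∈ P x → d ⬝ᵥ y ≤ d ⬝ᵥ yt)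
    -- `Δ` bounds the absolute value of every (nonempty) subdeterminant of `D`
    (Δ : ℝ)
    (hΔ : ∀ (k : ℕ), 0 < k → ∀ (ri : Fin k → Fin m) (ci : Fin k → Fin ny),
      Function.Injective ri → Function.Injective ci →
      |(((D.submatrix ri ci).det : ℤ) : ℝ)| ≤ Δ)
    -- `x*, ŷ*` solve the follower-relaxed bilevel problem
    (xstar : X) (yhstar : Fin ny → ℝ)
    (hyhstar : yhstar ∈ P xstar ∧ ∀ y ∈ P xstar, d ⬝ᵥ y ≤ d ⬝ᵥ yhstar)
    (hleaderopt : ∀ x : X, ∀ yh ∈ P x, (∀ y ∈ P x, d ⬝ᵥ y ≤ d ⬝ᵥ yh) →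
      h xstar + d ⬝ᵥ yhstar ≤ h x + d ⬝ᵥ yh) :
    ∀ x : X, ∀ y : Fin ny → ℝ, IsInt y → y ∈ P x →
      (∀ z, IsInt z → z ∈ P x → d ⬝ᵥ z ≤ d ⬝ᵥ y) →
      h xstar + d ⬝ᵥ yhstar ≤ h x + d ⬝ᵥ y + (∑ i, |d i|) * ny * Δ := by
  obtain rfl := funext hP
  intro x y hyint hyP hymax
  obtain ⟨w, hw⟩ := Classical.axiomOfChoice ((hIsInt y).1 hyint)
  obtain rfl : y = Int.cast ∘ w := funext hw
  have hminors : AbsMinorsLE (D.map (Int.cast : ℤ → ℝ)) Δ := fun k hk r c hr hc => by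
    rw [submatrix_map, ← Int.cast_det]
    exact hΔ k hk r c hr hc
  have hv (x : X) (c : ℝ)
      (hc : IsLUB ((d ⬝ᵥ ·) '' relaxedFeasibleSet (D.map Int.cast) (fun i => (g x i : ℝ))) c) :
      h xstar + d ⬝ᵥ yhstar ≤ h x + c := by
    obtain ⟨yh, hyh, hyhmax⟩ := hmaxR x
    exact (hleaderopt x yh hyh hyhmax).trans
      (add_le_add_right (hc.1 (Set.mem_image_of_mem _ hyh)) _)
  simpa only [Fintype.card_fin] using
    FRV_value_le_bilevel_optimum_add_linear_prox_general h d D (fun x i => (g x i : ℝ)) hminors hv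
      x w hyP fun z => hymax _ ((hIsInt _).2 fun i => ⟨z i, rfl⟩)
end
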